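/- arXiv:1511.01937 — 2 statements merged into one kernel-verified Lean document; each statement's English description precedes it below -/
import Mathlib

section
/- Let f : D → {0,1} be a partial function with D ⊆ {0,1}^n, and let φ be a certifying function for f. Then the cheat sheet version f_CS(φ) (with c = ⌈10·log₂ D(f)⌉ copies) satisfies deg(f_CS(φ)) = Õ(deg(φ)) and adeg(f_CS(φ)) = Õ(adeg(φ)). In particular, these bounds do not depend on the degree or approximate degree of f itself. -/
open scoped BigOperators ENNReal

namespace QC

/-! ### Inputs and partial functions -/

/-- An input assigns to each index `i` a symbol from the alphabet `Fin (α i)`. -/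
abbrev Input (ι : Type) (α : ι → ℕ) := ∀ i : ι, Fin (α i)

/-- A (possibly partial) Boolean-valued query function; `none` means the input
is outside the promise/domain. -/
abbrev PartialFn (ι : Type) (α : ι → ℕ) := Input ι α → Option Bool

/-- A total function has every input in its domain. -/
def TotalFn {ι : Type} {α : ι → ℕ} (f : PartialFn ι α) : Prop := ∀ x, f x ≠ none

/-- Classical truth value of a proposition, as a `Bool`. -/
noncomputable def ofProp (P : Prop) : Bool := @decide P (Classical.propDecidable P)

/-! ### Decision trees and classical query complexity -/

/-- Decision trees over index set `ι` with alphabets `α` and leaf labels `L`. -/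
inductive DTree (ι : Type) (α : ι → ℕ) (L : Type) : Type
  | leaf : L → DTree ι α L
  | node : (i : ι) → (Fin (α i) → DTree ι α L) → DTree ι α L

namespace DTree

variable {ι : Type} {α : ι → ℕ} {L : Type}

/-- Evaluate a decision tree on an input. -/
def eval : DTree ι α L → Input ι α → L
  | leaf b, _ => b
  | node i child, x => eval (child (x i)) x

/-- The number of queries the tree makes on a given input. -/
def cost : DTree ι α L → Input ι α → ℕ
  | leaf _, _ => 0
  | node i child, x => cost (child (x i)) x + 1

/-- The depth (worst-case number of queries) of a decision tree. -/
def depth : DTree ι α L → ℕ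
  | leaf _ => 0
  | node _ child => (Finset.univ.sup fun a => depth (child a)) + 1

end DTree

variable {ι : Type} {α : ι → ℕ}

/-- Deterministic query complexity `D(f)`. -/
noncomputable def Dq (f : PartialFn ι α) : ℕ :=
  sInf {d | ∃ T : DTree ι α (Option Bool), T.depth ≤ d ∧
    ∀ x b, f x = some b → T.eval x = some b}

/-- Bounded-error randomized query complexity `R(f)` (worst-case queries,
success probability at least 2/3 on every domain input). -/
noncomputable def Rq (f : PartialFn ι α) : ℕ :=
  sInf {d | ∃ μ : PMF (DTree ι α (Option Bool)),
    (∀ T ∈ μ.support, T.depth ≤ d) ∧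
    ∀ x b, f x = some b → 2/3 ≤ μ.toOuterMeasure {T | T.eval x = some b}}

/-- Zero-error randomized query complexity `R₀(f)` (worst-case queries): the
algorithm never errs, and outputs `none` ("don't know") with probability at most 1/2. -/
noncomputable def R0q (f : PartialFn ι α) : ℕ :=
  sInf {d | ∃ μ : PMF (DTree ι α (Option Bool)),
    (∀ T ∈ μ.support, T.depth ≤ d) ∧
    (∀ T ∈ μ.support, ∀ x b, f x = some b → T.eval x = some b ∨ T.eval x = none) ∧
    ∀ x b, f x = some b → μ.toOuterMeasure {T | T.eval x = none} ≤ 1/2}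

/-- Zero-error randomized query complexity, measured by the worst-case *expected*
number of queries over domain inputs (value in `ℝ≥0∞`). -/
noncomputable def R0expq (f : PartialFn ι α) : ℝ≥0∞ :=
  sInf {c | ∃ μ : PMF (DTree ι α (Option Bool)),
    (∀ T ∈ μ.support, ∀ x b, f x = some b → T.eval x = some b ∨ T.eval x = none) ∧
    (∀ x b, f x = some b → μ.toOuterMeasure {T | T.eval x = none} ≤ 1/2) ∧
    (∀ x b, f x = some b → ∑' T, μ T * (T.cost x : ℝ≥0∞) ≤ c)}

/-- One-sided-error randomized query complexity `R₁(f)`: accept every 1-input with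
probability at least 2/3, and never accept a 0-input. -/
noncomputable def R1q (f : PartialFn ι α) : ℕ :=
  sInf {d | ∃ μ : PMF (DTree ι α (Option Bool)),
    (∀ T ∈ μ.support, T.depth ≤ d) ∧
    (∀ x, f x = some true → 2/3 ≤ μ.toOuterMeasure {T | T.eval x = some true}) ∧
    (∀ x, f x = some false → ∀ T ∈ μ.support, T.eval x ≠ some true)}

/-! ### Quantum query complexity -/

/-- The index set of the state space of a quantum query algorithm:
a query register `Σ i, Fin (α i)` together with a workspace register `Fin W`. -/
abbrev QIdx (ι : Type) (α : ι → ℕ) (W : ℕ) := (Σ i : ι, Fin (α i)) × Fin W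

variable [Fintype ι] [DecidableEq ι]

/-- The standard query oracle for input `x`: the permutation matrix sending the basis
vector `|i,a⟩|w⟩` to `|i, a + x i⟩|w⟩` (addition modulo `α i`). -/
noncomputable def oracleMatrix (W : ℕ) (x : Input ι α) :
    Matrix (QIdx ι α W) (QIdx ι α W) ℂ :=
  Matrix.of fun j j' =>
    if j.2 = j'.2 ∧ j.1 = ⟨j'.1.1, j'.1.2 + x j'.1.1⟩ then 1 else 0

/-- The product `U_T · O · U_{T-1} · O ⋯ O · U_0` of unitaries interleaved with oracle
calls, defining a `T`-query quantum algorithm. -/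
noncomputable def qProd {τ : Type} [Fintype τ] (U : ℕ → Matrix τ τ ℂ) (Ox : Matrix τ τ ℂ) :
    ℕ → Matrix τ τ ℂ
  | 0 => U 0
  | t + 1 => U (t + 1) * Ox * qProd U Ox t

/-- A quantum query algorithm: a number `T` of queries, a workspace size `W`,
unitaries `U 0, …, U T`, a unit initial state, and a measurement assigning to each
basis state an output in `Option Bool` (`none` = "don't know"). -/
structure QAlg (ι : Type) [Fintype ι] [DecidableEq ι] (α : ι → ℕ) where
  T : ℕ
  W : ℕ
  U : ℕ → Matrix (QIdx ι α W) (QIdx ι α W) ℂ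
  unitary : ∀ t, U t ∈ Matrix.unitaryGroup (QIdx ι α W) ℂ
  init : QIdx ι α W → ℂ
  init_norm : ∑ j, ‖init j‖ ^ 2 = 1
  out : QIdx ι α W → Option Bool

/-- The final state of a quantum algorithm on input `x`. -/
noncomputable def QAlg.finalState (A : QAlg ι α) (x : Input ι α) : QIdx ι α A.W → ℂ :=
  (qProd A.U (oracleMatrix A.W x) A.T).mulVec A.init

/-- The probability that the algorithm outputs `v` on input `x`. -/
noncomputable def QAlg.outProb (A : QAlg ι α) (x : Input ι α) (v : Option Bool) : ℝ :=
  ∑ j, if A.out j = v then ‖A.finalState x j‖ ^ 2 else 0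

/-- Bounded-error quantum query complexity `Q(f)`. -/
noncomputable def Qq (f : PartialFn ι α) : ℕ :=
  sInf {d | ∃ A : QAlg ι α, A.T ≤ d ∧
    ∀ x b, f x = some b → (2 : ℝ)/3 ≤ A.outProb x (some b)}

/-- Exact quantum query complexity `Q_E(f)`. -/
noncomputable def QEq (f : PartialFn ι α) : ℕ :=
  sInf {d | ∃ A : QAlg ι α, A.T ≤ d ∧
    ∀ x b, f x = some b → A.outProb x (some b) = 1}

/-- One-sided-error quantum query complexity `Q₁(f)`. -/
noncomputable def Q1q (f : PartialFn ι α) : ℕ :=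
  sInf {d | ∃ A : QAlg ι α, A.T ≤ d ∧
    (∀ x, f x = some true → (2 : ℝ)/3 ≤ A.outProb x (some true)) ∧
    (∀ x, f x = some false → A.outProb x (some true) = 0)}

/-- Zero-error quantum query complexity `Q₀(f)`: never wrong, outputs `none`
with probability at most 1/2. -/
noncomputable def Q0q (f : PartialFn ι α) : ℕ :=
  sInf {d | ∃ A : QAlg ι α, A.T ≤ d ∧
    ∀ x b, f x = some b → A.outProb x (some !b) = 0 ∧ A.outProb x none ≤ 1/2}

/-! ### Certificate complexity -/

/-- A partial assignment `ρ` is consistent with an input `x`. -/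
def Consistent (ρ : ∀ i : ι, Option (Fin (α i))) (x : Input ι α) : Prop :=
  ∀ i v, ρ i = some v → x i = v

/-- The number of fixed positions of a partial assignment. -/
noncomputable def certSize (ρ : ∀ i : ι, Option (Fin (α i))) : ℕ :=
  Nat.card {i // (ρ i).isSome}

/-- The certificate complexity of `f` at input `x`: the least size of a partial
assignment consistent with `x` forcing the value `f x` on all domain inputs. -/
noncomputable def CxAt (f : PartialFn ι α) (x : Input ι α) : ℕ :=
  sInf {s | ∃ ρ, Consistent ρ x ∧ (∀ y, Consistent ρ y → f y = none ∨ f y = f x) ∧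
    certSize ρ ≤ s}

/-- Certificate complexity `C(f)`. -/
noncomputable def Cq (f : PartialFn ι α) : ℕ :=
  sSup {s | ∃ x, f x ≠ none ∧ s = CxAt f x}

/-- One-certificate complexity `C¹(f)`. -/
noncomputable def C1q (f : PartialFn ι α) : ℕ :=
  sSup {s | ∃ x, f x = some true ∧ s = CxAt f x}

/-! ### Polynomial degree -/

/-- Exact polynomial degree `deg(f)`: least degree of a real polynomial agreeing
with `f` (as a 0/1 function of the numerical values of the input symbols) on its domain. -/
noncomputable def degq (f : PartialFn ι α) : ℕ :=
  sInf {d | ∃ p : MvPolynomial ι ℝ, p.totalDegree ≤ d ∧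
    ∀ x b, f x = some b →
      MvPolynomial.eval (fun i => ((x i : ℕ) : ℝ)) p = if b then 1 else 0}

/-- Approximate polynomial degree `adeg(f)`: least degree of a real polynomial
approximating `f` pointwise to error 1/3 on its domain. -/
noncomputable def adegq (f : PartialFn ι α) : ℕ :=
  sInf {d | ∃ p : MvPolynomial ι ℝ, p.totalDegree ≤ d ∧
    ∀ x b, f x = some b →
      |MvPolynomial.eval (fun i => ((x i : ℕ) : ℝ)) p - if b then 1 else 0| ≤ 1/3}

end QC
/-! ### Certifying functions and cheat sheets -/

namespace QC

variable {ι : Type} {α : ι → ℕ}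

/-- `φ` is a certifying function for the partial function `f`: it accepts `(x, y)`
only when `x` is in the domain of `f` and the first bit of `y` equals `f x`; every
domain input has some accepted certificate `y`; and the all-zeros `y` is never accepted. -/
def IsCertifying {k : ℕ} (hk : 0 < k) (f : PartialFn ι α)
    (φ : Input ι α → (Fin k → Fin 2) → Bool) : Prop :=
  (∀ x y, f x = none → φ x y = false) ∧
  (∀ x y b, f x = some b → y ⟨0, hk⟩ ≠ (if b then 1 else 0) → φ x y = false) ∧
  (∀ x b, f x = some b → ∃ y, φ x y = true) ∧
  (∀ x, φ x (fun _ => 0) = false)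

/-- The index set of the input to a certifying function, viewed as a query function:
the original input together with `k` certificate bits. -/
abbrev CertIdx (ι : Type) (k : ℕ) := ι ⊕ Fin k

/-- Alphabets for `CertIdx`. -/
def certAlphabet (α : ι → ℕ) (k : ℕ) : CertIdx ι k → ℕ := Sum.elim α fun _ => 2

/-- A certifying function viewed as a total query function on input ⊕ certificate bits. -/
def certFn {k : ℕ} (φ : Input ι α → (Fin k → Fin 2) → Bool) :
    PartialFn (CertIdx ι k) (certAlphabet α k) :=
  fun z => some (φ (fun i => z (Sum.inl i)) (fun q => z (Sum.inr q)))

/-- The index set of the input to the cheat sheet version of a function: `c` copies of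
the original input, followed by `2^c` cells each holding `c` certificate strings of `k` bits. -/
abbrev CSIdx (ι : Type) (c k : ℕ) := (Fin c × ι) ⊕ (Fin (2 ^ c) × Fin c × Fin k)

/-- Alphabets for `CSIdx`. -/
def csAlphabet (α : ι → ℕ) (c k : ℕ) : CSIdx ι c k → ℕ :=
  Sum.elim (fun p => α p.2) fun _ => 2

/-- The `i`-th copy of the original input inside a cheat sheet input. -/
def csX {c k : ℕ} (z : Input (CSIdx ι c k) (csAlphabet α c k)) (i : Fin c) : Input ι α :=
  fun p => z (Sum.inl (i, p))

/-- The `i`-th certificate string in the `ℓ`-th cheat sheet cell. -/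
def csY {c k : ℕ} (z : Input (CSIdx ι c k) (csAlphabet α c k)) (ℓ : Fin (2 ^ c))
    (i : Fin c) : Fin k → Fin 2 :=
  fun q => z (Sum.inr (ℓ, i, q))

/-- The number in `[2^c]` whose binary representation is the bit string `b`. -/
def binToFin (c : ℕ) (b : Fin c → Bool) : Fin (2 ^ c) :=
  ⟨(∑ i, if b i then 2 ^ (i : ℕ) else 0) % 2 ^ c, Nat.mod_lt _ (by positivity)⟩

/-- The defining condition of the cheat sheet function: all `c` copies lie in the
domain of `f`, and the cell addressed by their `f`-values holds certificates
accepted by `φ` for each copy. -/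
def CSCond {c k : ℕ} (f : PartialFn ι α) (φ : Input ι α → (Fin k → Fin 2) → Bool)
    (z : Input (CSIdx ι c k) (csAlphabet α c k)) : Prop :=
  ∃ bvec : Fin c → Bool, (∀ i, f (csX z i) = some (bvec i)) ∧
    ∀ i, φ (csX z i) (csY z (binToFin c bvec) i) = true

/-- The cheat sheet version of `f` with respect to the certifying function `φ`,
with `c` copies of `f`. It is a total function. -/
noncomputable def cheatSheet (c : ℕ) {k : ℕ} (f : PartialFn ι α)
    (φ : Input ι α → (Fin k → Fin 2) → Bool) :
    PartialFn (CSIdx ι c k) (csAlphabet α c k) :=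
  fun z => some (ofProp (CSCond f φ z))

/-! ### OR / AND compositions -/

/-- The `OR` function on `m` bits (alphabet `Fin 2`). -/
def orFn (m : ℕ) (z : Fin m → Fin 2) : Fin 2 := if ∃ j, z j = 1 then 1 else 0

/-- The `AND` function on `m` bits (alphabet `Fin 2`). -/
def andFn (m : ℕ) (z : Fin m → Fin 2) : Fin 2 := if ∀ j, z j = 1 then 1 else 0

/-- The composition `f ∘ OR_m`. -/
def composeOr {n : ℕ} (f : PartialFn (Fin n) fun _ => 2) (m : ℕ) :
    PartialFn (Fin n × Fin m) (fun _ => 2) :=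
  fun z => f fun i => orFn m fun j => z (i, j)

/-- The composition `f ∘ AND_m ∘ OR_m`. -/
def composeAndOr {n : ℕ} (f : PartialFn (Fin n) fun _ => 2) (m : ℕ) :
    PartialFn (Fin n × Fin m × Fin m) (fun _ => 2) :=
  fun z => f fun i => andFn m fun j => orFn m fun l => z (i, j, l)

/-! ### k-SUM, Block k-sum, BKK and its recursive composition -/

/-- The `k`-SUM function on `n` numbers from `[q]`: is there a set of `k` of the
input numbers summing to `0` modulo `q`? -/
noncomputable def kSUMfn (n q k : ℕ) : PartialFn (Fin n) (fun _ => q) :=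
  fun x => some (ofProp (∃ S : Finset (Fin n), S.card = k ∧
    (∑ i ∈ S, (x i : ℕ)) % q = 0))

/-- Number of ones in a block of bits. -/
def onesCount {B : ℕ} (z : Fin B → Fin 2) : ℕ := (Finset.univ.filter fun j => z j = 1).card

/-- The number encoded in binary by a block of bits. -/
def blockVal {B : ℕ} (z : Fin B → Fin 2) : ℕ := ∑ j, if z j = 1 then 2 ^ (j : ℕ) else 0

/-- A block is balanced if it has an equal number of 0s and 1s. -/
def isBalanced {B : ℕ} (z : Fin B → Fin 2) : Prop := 2 * onesCount z = B

/-- Block `k`-sum on `nb` blocks of `B` bits each: value 1 iff there are `k` balanced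
blocks whose encoded numbers sum to 0 (mod `2^B`) and every other block has at least
as many 1s as 0s. -/
noncomputable def blockKSumBool (nb B k : ℕ) (z : Fin nb × Fin B → Fin 2) : Bool :=
  ofProp (∃ S : Finset (Fin nb), S.card = k ∧
    (∀ i ∈ S, isBalanced fun j => z (i, j)) ∧
    (∑ i ∈ S, blockVal fun j => z (i, j)) % 2 ^ B = 0 ∧
    ∀ i ∉ S, B ≤ 2 * onesCount fun j => z (i, j))

/-- The Boolean version of `k`-SUM on `m` numbers of `w` bits each (mod `2^w`). -/
noncomputable def kSumBool (m w k : ℕ) (z : Fin m × Fin w → Fin 2) : Bool :=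
  ofProp (∃ S : Finset (Fin m), S.card = k ∧
    (∑ i ∈ S, blockVal fun j => z (i, j)) % 2 ^ w = 0)

/-- Block size of the outer Block `k`-sum in `BKK` on (roughly) `n` outer bits. -/
def bkkB (n k : ℕ) : ℕ := 10 * k * Nat.log 2 n
/-- Number of blocks of the outer Block `k`-sum in `BKK`. -/
def bkkNB (n k : ℕ) : ℕ := n / bkkB n k
/-- Bits per number of the inner Boolean `k`-SUM in `BKK`. -/
def bkkW (n k : ℕ) : ℕ := k * Nat.log 2 n
/-- Number of numbers of the inner Boolean `k`-SUM in `BKK`. -/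
def bkkM (n k : ℕ) : ℕ := n / bkkW n k

/-- The index set of the inputs of `BKK_{n²,k}` (one inner `k`-SUM input bit for
each outer Block `k`-sum input bit; roughly `n²` bits in total). -/
abbrev BKKIdx (n k : ℕ) := (Fin (bkkNB n k) × Fin (bkkB n k)) × (Fin (bkkM n k) × Fin (bkkW n k))

/-- `BKK_{n²,k}`: Block `k`-sum composed with the Boolean version of `k`-SUM. -/
noncomputable def bkkBool (n k : ℕ) (z : BKKIdx n k → Fin 2) : Bool :=
  blockKSumBool (bkkNB n k) (bkkB n k) k fun ob =>
    if kSumBool (bkkM n k) (bkkW n k) k (fun p => z (ob, p)) then 1 else 0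

/-- `BKK_{n²,k}` as a total query function. -/
noncomputable def BKKfn (n k : ℕ) : PartialFn (BKKIdx n k) (fun _ => 2) :=
  fun z => some (bkkBool n k z)

/-- The `d`-fold self-composition of a total Boolean function `g`: a depth-`d` tree
each of whose internal nodes is a copy of `g`; input bits are indexed by root-to-leaf
paths `Fin d → I`. -/
noncomputable def iterFn {I : Type} (g : (I → Fin 2) → Bool) :
    (d : ℕ) → ((Fin d → I) → Fin 2) → Bool
  | 0, z => decide (z (fun i => i.elim0) = 1)
  | d + 1, z => g fun a => if iterFn g d (fun v => z (Fin.cons a v)) then 1 else 0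

/-- The recursion depth used for `RecBKK`: `d = (4/25)·log n / log log n`. -/
def recD (n : ℕ) : ℕ := 4 * Nat.log 2 n / (25 * Nat.log 2 (Nat.log 2 n))

/-- The index set of the inputs of `RecBKK`. -/
abbrev RecIdx (n : ℕ) := Fin (recD n) → BKKIdx n (Nat.log 2 n)

/-- `RecBKK`: the `recD n`-fold self-composition of `BKK` with `k = log n`. -/
noncomputable def RecBKKfn (n : ℕ) : PartialFn (RecIdx n) (fun _ => 2) :=
  fun z => some (iterFn (bkkBool n (Nat.log 2 n)) (recD n) z)

/-- The nominal input size `N = n^{2d}` of `RecBKK`. -/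
def recN (n : ℕ) : ℕ := n ^ (2 * recD n)

end QC

/-!
Since `c` depends on `D(f)`, one first needs `D(f)` to be polynomial in `adeg(φ)`. Moving from an
input along disjoint sensitive blocks of `φ`, an approximating polynomial stays bounded while its
slope grows with the number of blocks, so Markov's inequality gives `bs(φ) = O(adeg(φ)²)`. Hence `φ`
has certificates of size `O(adeg(φ)⁴)`; a certificate of an accepting input `(x, y)`, restricted to
the `x`-part, certifies `f(x)`, because `y` already determines the value of `f`. Certificates of
size `K` for all domain inputs yield `D(f) ≤ K²`, so `c = O(log adeg(φ))`.

The polynomial for `f_CS` sums over the `2^c` cells the product of `c` copies of a polynomial for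
`φ`, each multiplied by the literal saying that the certified bit agrees with the address of the
cell. At most one cell contributes `1`, so in the exact case the degree is `c (deg(φ) + 1)`. In the
approximate case, composing with a majority polynomial of degree `O(c)` first reduces the error to
`4^(-(c + 1))`, which the sum over `2^c` products of `c` factors tolerates.
-/

namespace QC

open Polynomial in
theorem abs_eval_derivative_one_le {P : ℝ[X]} {n : ℕ} (hdeg : P.natDegree ≤ n)
    (hP : ∀ x ∈ Set.Icc (-1 : ℝ) 1, |P.eval x| ≤ 1) : |P.derivative.eval 1| ≤ (n : ℝ) ^ 2 := by
  have upper : ∀ {P : ℝ[X]}, P.natDegree ≤ n → (∀ x ∈ Set.Icc (-1 : ℝ) 1, |P.eval x| ≤ 1) →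
      P.derivative.eval 1 ≤ (n : ℝ) ^ 2 := fun hdeg hP => by
    simpa [Chebyshev.derivative_T_eval_one] using
      Chebyshev.eval_iterate_derivative_le_of_forall_abs_le_one le_rfl
        (natDegree_le_iff_degree_le.1 hdeg) hP (k := 1)
  exact abs_le'.2 ⟨upper hdeg hP, by
    simpa using upper (P := -P) (by simpa using hdeg) (by simpa using hP)⟩

open Polynomial in
theorem abs_eval_derivative_zero_le {Q : ℝ[X]} {d : ℕ} {a b : ℝ} (hdeg : Q.natDegree ≤ d)
    (hab : a < b) (hQ : ∀ t ∈ Set.Icc (0 : ℝ) 1, Q.eval t ∈ Set.Icc a b) :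
    |Q.derivative.eval 0| ≤ (b - a) * (d : ℝ) ^ 2 := by
  have hba : 0 < b - a := sub_pos.2 hab
  set P : ℝ[X] := C (2 / (b - a)) * (Q.comp (C (1 / 2) * (1 - X)) - C ((a + b) / 2)) with hPdef
  have hP : ∀ x ∈ Set.Icc (-1 : ℝ) 1, |P.eval x| ≤ 1 := fun x hx => by
    obtain ⟨hl, hr⟩ := hQ (1 / 2 * (1 - x)) ⟨by linarith [hx.2], by linarith [hx.1]⟩
    have : P.eval x = (2 * Q.eval (1 / 2 * (1 - x)) - (a + b)) / (b - a) := by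
      simp only [hPdef, eval_mul, eval_C, eval_sub, eval_comp, eval_one, eval_X]
      field_simp
    rw [this, abs_div, abs_of_pos hba, div_le_one hba, abs_le]
    constructor <;> linarith
  have hPdeg : P.natDegree ≤ d := by
    have hlin : (C (1 / 2) * (1 - X) : ℝ[X]).natDegree ≤ 1 := by compute_degree
    refine (natDegree_C_mul_le _ _).trans ((natDegree_sub_C ..).trans_le ?_)
    refine natDegree_comp_le.trans ?_
    exact (Nat.mul_le_mul hdeg hlin).trans_eq (mul_one d)
  have hderiv : P.derivative.eval 1 = - Q.derivative.eval 0 / (b - a) := by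
    simp only [hPdef, derivative_sub, derivative_C, derivative_comp,
      derivative_mul, derivative_one, derivative_X, eval_mul, eval_C, eval_sub, eval_comp,
      eval_add, eval_zero, eval_one, eval_X]
    field_simp
    ring_nf
  have := abs_eval_derivative_one_le hPdeg hP
  rwa [hderiv, abs_div, abs_neg, abs_of_pos hba, div_le_iff₀' hba] at this

section BernoulliMean

open Polynomial

variable {σ : Type*} [DecidableEq σ]

theorem eval_monomial_indicator (m : σ →₀ ℕ) (a : ℝ) (S : Finset σ) :
    (MvPolynomial.monomial m a).eval (fun v => if v ∈ S then 1 else 0) =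
      if m.support ⊆ S then a else 0 := by
  rw [MvPolynomial.eval_monomial, Finsupp.prod]
  split_ifs with hS
  · rw [Finset.prod_eq_one fun v hv => by simp [hS hv], mul_one]
  · obtain ⟨v, hv, hvS⟩ := Finset.not_subset.1 hS
    rw [Finset.prod_eq_zero hv (by simp [hvS, Finsupp.mem_support_iff.1 hv]), mul_zero]

variable [Fintype σ]

/-- The mean of `P` over a random `0/1` point whose coordinates are independently `1` with
probability `t`, as a polynomial in `t`. -/
noncomputable def bernoulliMean (P : MvPolynomial σ ℝ) : ℝ[X] :=
  ∑ S : Finset σ, C (P.eval fun v => if v ∈ S then 1 else 0) * (X ^ S.card * (1 - X) ^ Sᶜ.card)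

theorem sum_superset_X_pow_mul_one_sub_X_pow (T : Finset σ) :
    ∑ S : Finset σ, (if T ⊆ S then X ^ S.card * (1 - X) ^ Sᶜ.card else 0 : ℝ[X]) = X ^ T.card := by
  have hterm (S : Finset σ) :
      (∏ _v ∈ S, X) * ∏ v ∈ Finset.univ \ S, (if v ∈ T then 0 else 1 - X) =
        (if T ⊆ S then X ^ S.card * (1 - X) ^ Sᶜ.card else 0 : ℝ[X]) := by
    split_ifs with hTS
    · rw [Finset.prod_const, ← Finset.compl_eq_univ_sdiff, Finset.prod_congr rfl fun v hv =>
        if_neg fun hvT => Finset.mem_compl.1 hv (hTS hvT), Finset.prod_const]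
    · obtain ⟨v, hvT, hvS⟩ := Finset.not_subset.1 hTS
      exact mul_eq_zero_of_right _ <|
        Finset.prod_eq_zero (Finset.mem_sdiff.2 ⟨Finset.mem_univ v, hvS⟩) (if_pos hvT)
  calc
    _ = ∏ v : σ, (X + if v ∈ T then 0 else 1 - X : ℝ[X]) := by
      rw [Finset.prod_add, Finset.powerset_univ]
      exact Finset.sum_congr rfl fun S _ => (hterm S).symm
    _ = ∏ v : σ, if v ∈ T then X else 1 := by
      refine Finset.prod_congr rfl fun v _ => ?_
      split_ifs <;> ring
    _ = X ^ T.card := by simp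

theorem bernoulliMean_eq_sum_support (P : MvPolynomial σ ℝ) :
    bernoulliMean P = ∑ m ∈ P.support, C (P.coeff m) * X ^ m.support.card := by
  have heval (S : Finset σ) : P.eval (fun v => if v ∈ S then 1 else 0) =
      ∑ m ∈ P.support, if m.support ⊆ S then P.coeff m else 0 := by
    conv_lhs => rw [P.as_sum, map_sum]
    simp only [eval_monomial_indicator]
  simp only [bernoulliMean, heval, map_sum, Finset.sum_mul]
  rw [Finset.sum_comm]
  refine Finset.sum_congr rfl fun m _ => ?_
  rw [← sum_superset_X_pow_mul_one_sub_X_pow, Finset.mul_sum]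
  refine Finset.sum_congr rfl fun S _ => ?_
  split_ifs <;> simp

theorem natDegree_bernoulliMean_le (P : MvPolynomial σ ℝ) :
    (bernoulliMean P).natDegree ≤ P.totalDegree := by
  rw [bernoulliMean_eq_sum_support]
  refine natDegree_sum_le_of_forall_le _ _ fun m hm => (natDegree_C_mul_X_pow_le _ _).trans ?_
  calc
    m.support.card = ∑ _v ∈ m.support, 1 := Finset.card_eq_sum_ones _
    _ ≤ m.sum fun _ e => e :=
      Finset.sum_le_sum fun v hv => Nat.one_le_iff_ne_zero.2 (Finsupp.mem_support_iff.1 hv)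
    _ ≤ P.totalDegree := MvPolynomial.le_totalDegree hm

theorem eval_bernoulliMean_mem {P : MvPolynomial σ ℝ} {K : Set ℝ} (hK : Convex ℝ K)
    (hP : ∀ S : Finset σ, P.eval (fun v => if v ∈ S then 1 else 0) ∈ K) {t : ℝ}
    (ht : t ∈ Set.Icc (0 : ℝ) 1) : (bernoulliMean P).eval t ∈ K := by
  have ht' : 0 ≤ 1 - t := sub_nonneg.2 ht.2
  have hone : ∑ S : Finset σ, t ^ S.card * (1 - t) ^ Sᶜ.card = 1 := by
    simpa [eval_finsetSum] using
      congrArg (eval t) (sum_superset_X_pow_mul_one_sub_X_pow (∅ : Finset σ))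
  have hconv := hK.sum_mem (t := Finset.univ)
    (fun S _ => mul_nonneg (pow_nonneg ht.1 S.card) (pow_nonneg ht' Sᶜ.card)) hone
    fun S _ => hP S
  simpa [bernoulliMean, eval_finsetSum, mul_comm] using hconv

theorem eval_zero_derivative_bernoulliMean (P : MvPolynomial σ ℝ) :
    (bernoulliMean P).derivative.eval 0 =
      ∑ v, (P.eval (fun w => if w = v then 1 else 0) - P.eval fun _ => 0) := by
  have hweight (S : Finset σ) : (derivative (X ^ S.card * (1 - X) ^ Sᶜ.card : ℝ[X])).eval 0 =
      ∑ v, ((if S = {v} then 1 else 0) - if S = ∅ then 1 else 0 : ℝ) := by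
    rcases S.eq_empty_or_nonempty with rfl | hS
    · simp [derivative_pow, (Finset.singleton_ne_empty _).symm]
    · rcases Nat.lt_or_ge 1 S.card with hlarge | hsmall
      · have hsing (v : σ) : S ≠ {v} := fun h => by simp [h] at hlarge
        simp [derivative_pow, hS.ne_empty, hsing, (Nat.sub_pos_of_lt hlarge).ne',
          (Nat.zero_lt_of_lt hlarge).ne']
      · obtain ⟨u, rfl⟩ := Finset.card_eq_one.1 (hsmall.antisymm hS.card_pos)
        simp
  simp only [bernoulliMean, derivative_sum, derivative_C_mul, eval_finsetSum, eval_C_mul, hweight,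
    Finset.mul_sum]
  rw [Finset.sum_comm]
  refine Finset.sum_congr rfl fun v _ => ?_
  simp [mul_sub, Finset.sum_sub_distrib]

end BernoulliMean

section Directions

open MvPolynomial

theorem totalDegree_bind₁_le {σ τ R : Type*} [CommSemiring R] {L : σ → MvPolynomial τ R} {e : ℕ}
    (hL : ∀ i, (L i).totalDegree ≤ e) (p : MvPolynomial σ R) :
    (bind₁ L p).totalDegree ≤ p.totalDegree * e := by
  conv_lhs => rw [p.as_sum, map_sum]
  refine totalDegree_finsetSum_le fun m hm => ?_
  rw [bind₁_monomial]
  refine (totalDegree_mul _ _).trans ?_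
  rw [totalDegree_C, zero_add]
  calc
    _ ≤ ∑ i ∈ m.support, (L i ^ m i).totalDegree := totalDegree_finsetProd _ _
    _ ≤ ∑ i ∈ m.support, m i * e := Finset.sum_le_sum fun i _ =>
      (totalDegree_pow _ _).trans (Nat.mul_le_mul_left _ (hL i))
    _ = (m.sum fun _ e => e) * e := (Finset.sum_mul ..).symm
    _ ≤ p.totalDegree * e := Nat.mul_le_mul_right _ (le_totalDegree hm)

variable {σ τ : Type*}

theorem exists_eval_indicator_eq [Finite τ] [DecidableEq τ] (p : MvPolynomial σ ℝ) (u : σ → ℝ)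
    (v : τ → σ → ℝ) :
    ∃ P : MvPolynomial τ ℝ, P.totalDegree ≤ p.totalDegree ∧
      ∀ S : Finset τ, P.eval (fun b => if b ∈ S then 1 else 0) = p.eval (u + ∑ b ∈ S, v b) := by
  cases nonempty_fintype τ
  let L : σ → MvPolynomial τ ℝ := fun i => C (u i) + ∑ b, C (v b i) * X b
  have hL (i : σ) : (L i).totalDegree ≤ 1 := by
    refine (totalDegree_add _ _).trans (max_le (by simp) ?_)
    refine totalDegree_finsetSum_le fun b _ => (totalDegree_mul _ _).trans ?_
    rw [totalDegree_C, zero_add, totalDegree_X]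
  refine ⟨bind₁ L p, by simpa using totalDegree_bind₁_le hL p, fun S => ?_⟩
  have hcoord : (u + ∑ b ∈ S, v b) = fun i => (L i).eval fun b => if b ∈ S then 1 else 0 := by
    ext i
    simp [L]
  rw [hcoord]
  exact eval₂Hom_bind₁ _ _ _ _

theorem abs_sum_eval_add_sub_le [Fintype τ] {p : MvPolynomial σ ℝ} {u : σ → ℝ} {v : τ → σ → ℝ}
    {a b : ℝ} (hab : a < b) (hp : ∀ S : Finset τ, p.eval (u + ∑ t ∈ S, v t) ∈ Set.Icc a b) :
    |∑ t, (p.eval (u + v t) - p.eval u)| ≤ (b - a) * (p.totalDegree : ℝ) ^ 2 := by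
  classical
  obtain ⟨P, hPdeg, hPeval⟩ := exists_eval_indicator_eq p u v
  have hsum : ∑ t, (p.eval (u + v t) - p.eval u) = (bernoulliMean P).derivative.eval 0 := by
    rw [eval_zero_derivative_bernoulliMean]
    refine Finset.sum_congr rfl fun t _ => ?_
    simpa using congrArg₂ (· - ·) (hPeval {t}).symm (hPeval ∅).symm
  rw [hsum]
  exact abs_eval_derivative_zero_le ((natDegree_bernoulliMean_le P).trans hPdeg) hab fun t ht =>
    eval_bernoulliMean_mem (convex_Icc a b) (fun S => hPeval S ▸ hp S) ht

end Directions

section Sensitivity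

variable {ι : Type} {α : ι → ℕ}

/-- The real point at which `degq` and `adegq` evaluate a polynomial on the input `x`. -/
def realCoords (x : Input ι α) : ι → ℝ := fun i => ((x i : ℕ) : ℝ)

/-- The polynomial `p` is within `ε` of the partial function `f` on the domain of `f`: the case
`ε = 0` underlies `degq`, the case `ε = 1 / 3` underlies `adegq`. -/
def Approximates (p : MvPolynomial ι ℝ) (f : PartialFn ι α) (ε : ℝ) : Prop :=
  ∀ x b, f x = some b → |p.eval (realCoords x) - if b then 1 else 0| ≤ ε

theorem exists_realCoords_eq_add_sum {τ : Type*} {x : Input ι α} {y : τ → Input ι α}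
    (hdisj : ∀ i t t', y t i ≠ x i → y t' i ≠ x i → t = t') (S : Finset τ) :
    ∃ z : Input ι α, realCoords z = realCoords x + ∑ t ∈ S, (realCoords (y t) - realCoords x) := by
  suffices ∀ i, ∃ a : Fin (α i),
      ((a : ℕ) : ℝ) = ((x i : ℕ) : ℝ) + ∑ t ∈ S, (((y t i : ℕ) : ℝ) - ((x i : ℕ) : ℝ)) by
    choose z hz using this
    exact ⟨z, funext fun i => by
      rw [Pi.add_apply, Finset.sum_apply]
      exact hz i⟩
  intro i
  by_cases h : ∃ t ∈ S, y t i ≠ x i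
  · obtain ⟨t, htS, ht⟩ := h
    refine ⟨y t i, ?_⟩
    rw [Finset.sum_eq_single_of_mem t htS fun t' _ ht' => ?_, add_sub_cancel]
    rw [not_not.1 fun hne => ht' (hdisj i t' t hne ht), sub_self]
  · push Not at h
    refine ⟨x i, ?_⟩
    rw [Finset.sum_eq_zero fun t ht => by rw [h t ht, sub_self], add_zero]

variable {F : Input ι α → Bool} {p : MvPolynomial ι ℝ}

theorem card_div_three_le_abs_sum_eval_sub (hp : Approximates p (fun x => some (F x)) (1 / 3))
    {τ : Type*} [Fintype τ] {x : Input ι α} {y : τ → Input ι α} (hsens : ∀ t, F (y t) ≠ F x) :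
    (Fintype.card τ : ℝ) / 3 ≤ |∑ t, (p.eval (realCoords (y t)) - p.eval (realCoords x))| := by
  have hcard (g : τ → ℝ) (hg : ∀ t, 1 / 3 ≤ g t) : (Fintype.card τ : ℝ) / 3 ≤ ∑ t, g t := by
    simpa [div_eq_mul_inv] using Finset.card_nsmul_le_sum Finset.univ g (1 / 3) fun t _ => hg t
  have hx := abs_le.1 (hp x _ rfl)
  have hy (t : τ) := abs_le.1 (hp (y t) _ rfl)
  cases hFx : F x with
  | false =>
    refine (hcard _ fun t => ?_).trans (le_abs_self _)
    have := hy t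
    simp only [Bool.eq_true_of_not_eq_false (hFx ▸ hsens t), hFx] at hx this
    norm_num at hx this
    linarith
  | true =>
    rw [← abs_neg, ← Finset.sum_neg_distrib]
    refine (hcard _ fun t => ?_).trans (le_abs_self _)
    have := hy t
    simp only [Bool.eq_false_of_not_eq_true (hFx ▸ hsens t), hFx] at hx this
    norm_num at hx this
    linarith

theorem card_le_five_mul_sq_of_sensitive (hp : Approximates p (fun x => some (F x)) (1 / 3))
    {τ : Type*} [Fintype τ] {x : Input ι α} {y : τ → Input ι α}
    (hdisj : ∀ i t t', y t i ≠ x i → y t' i ≠ x i → t = t') (hsens : ∀ t, F (y t) ≠ F x) :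
    Fintype.card τ ≤ 5 * p.totalDegree ^ 2 := by
  have hrange (z : Input ι α) : p.eval (realCoords z) ∈ Set.Icc (-1 / 3 : ℝ) (4 / 3) := by
    have := abs_le.1 (hp z _ rfl)
    constructor <;> split_ifs at this <;> linarith
  have hvariation := abs_sum_eval_add_sub_le (p := p) (u := realCoords x)
    (v := fun t => realCoords (y t) - realCoords x) (a := -1 / 3) (b := 4 / 3) (by norm_num)
    fun S => by
      obtain ⟨z, hz⟩ := exists_realCoords_eq_add_sum hdisj S
      exact hz ▸ hrange z
  simp only [add_sub_cancel] at hvariation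
  have hcard := (card_div_three_le_abs_sum_eval_sub hp hsens).trans hvariation
  have : (Fintype.card τ : ℝ) ≤ 5 * (p.totalDegree : ℝ) ^ 2 := by linarith
  exact_mod_cast this

end Sensitivity

section Blocks

variable {ι : Type*} {X : ι → Type*} {β : Type*} {F : (∀ i, X i) → β} {x : ∀ i, X i}
  {B : Finset ι} {N : ℕ}

/-- `F` is sensitive at `x` to the block `B`: changing `x` inside `B` only can change the value. -/
def IsSensitiveBlock (F : (∀ i, X i) → β) (x : ∀ i, X i) (B : Finset ι) : Prop :=
  ∃ y, (∀ i ∉ B, y i = x i) ∧ F y ≠ F x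

/-- The block sensitivity of `F`, the largest size of a family of disjoint sensitive blocks at a
common input, is at most `N`. -/
def BlockSensitivityLE (F : (∀ i, X i) → β) (N : ℕ) : Prop :=
  ∀ (x : ∀ i, X i) (𝓑 : Finset (Finset ι)), (𝓑 : Set (Finset ι)).PairwiseDisjoint id →
    (∀ B ∈ 𝓑, IsSensitiveBlock F x B) → 𝓑.card ≤ N

/-- The values of `x` on `A` certify the value of `F` at `x`: they force it on every input. -/
def IsCertificate (F : (∀ i, X i) → β) (x : ∀ i, X i) (A : Finset ι) : Prop :=
  ∀ y, (∀ i ∈ A, y i = x i) → F y = F x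

theorem IsSensitiveBlock.nonempty (hB : IsSensitiveBlock F x B) : B.Nonempty := by
  obtain ⟨y, hy, hne⟩ := hB
  refine Finset.nonempty_iff_ne_empty.2 fun hempty => hne ?_
  rw [funext fun i => hy i (by simp [hempty])]

theorem card_le_of_minimal_isSensitiveBlock (hF : BlockSensitivityLE F N)
    (hB : Minimal (IsSensitiveBlock F x) B) : B.card ≤ N := by
  classical
  obtain ⟨y, hyx, hne⟩ := hB.prop
  have hsingle : ∀ i ∈ B, IsSensitiveBlock F y {i} := fun i hi => by
    refine ⟨Function.update y i (x i), fun j hj => ?_, fun hupdate => ?_⟩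
    · exact Function.update_of_ne (by simpa using hj) _ _
    · have herase : IsSensitiveBlock F x (B.erase i) := by
        refine ⟨Function.update y i (x i), fun j hj => ?_, hupdate ▸ hne⟩
        by_cases hji : j = i
        · rw [hji, Function.update_self]
        · rw [Function.update_of_ne hji]
          exact hyx j fun hjB => hj (Finset.mem_erase.2 ⟨hji, hjB⟩)
      exact Finset.notMem_erase i B (hB.le_of_le herase (Finset.erase_subset i B) hi)
  rw [← Finset.card_map ⟨singleton, Finset.singleton_injective⟩]
  refine hF y _ ?_ (by simpa using hsingle)
  simp only [Finset.coe_map, Function.Embedding.coeFn_mk]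
  rintro _ ⟨i, -, rfl⟩ _ ⟨j, -, rfl⟩ hij
  exact Finset.disjoint_singleton.2 fun h => hij (congrArg singleton h)

theorem exists_isCertificate_card_le [Finite ι] (hF : BlockSensitivityLE F N) (x : ∀ i, X i) :
    ∃ A : Finset ι, A.card ≤ N ^ 2 ∧ IsCertificate F x A := by
  classical
  cases nonempty_fintype ι
  let IsPacking (𝓑 : Finset (Finset ι)) : Prop :=
    (𝓑 : Set (Finset ι)).PairwiseDisjoint id ∧ ∀ B ∈ 𝓑, Minimal (IsSensitiveBlock F x) B
  obtain ⟨𝓑, -, ⟨hdisj, hmin⟩, hmax⟩ :=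
    exists_maximal_ge_of_wellFoundedGT IsPacking ∅ (by simp [IsPacking])
  have hcard : 𝓑.card ≤ N := hF x 𝓑 hdisj fun B hB => (hmin B hB).prop
  refine ⟨𝓑.biUnion id, ?_, fun y hyx => by_contra fun hne => ?_⟩
  · calc
      _ ≤ 𝓑.card * N := Finset.card_biUnion_le_card_mul _ _ _ fun B hB =>
        card_le_of_minimal_isSensitiveBlock hF (hmin B hB)
      _ ≤ N ^ 2 := (Nat.mul_le_mul_right N hcard).trans_eq (sq N).symm
  · have hdiff : IsSensitiveBlock F x {i | y i ≠ x i} := ⟨y, by simp, hne⟩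
    obtain ⟨B, hBle, hB⟩ := exists_minimal_le_of_wellFoundedLT _ _ hdiff
    have hBdisj : ∀ B' ∈ 𝓑, Disjoint B B' := fun B' hB' => Finset.disjoint_left.2 fun i hi hi' =>
      (Finset.mem_filter.1 (hBle hi)).2 (hyx i (Finset.mem_biUnion.2 ⟨B', hB', hi'⟩))
    have hinsert : IsPacking (insert B 𝓑) := by
      refine ⟨?_, by simpa using ⟨hB, hmin⟩⟩
      rw [Finset.coe_insert]
      exact hdisj.insert fun B' hB' _ => hBdisj B' hB'
    have hmem : B ∈ 𝓑 := hmax hinsert (Finset.subset_insert B 𝓑) (Finset.mem_insert_self B 𝓑)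
    exact hB.prop.nonempty.ne_empty (disjoint_self.1 (hBdisj B hmem))

theorem IsCertificate.exists_mem_inter_ne [DecidableEq ι] {y : ∀ i, X i} {A : Finset ι}
    (hA : IsCertificate F x A) (hB : IsCertificate F y B) (hne : F x ≠ F y) :
    ∃ i ∈ A ∩ B, x i ≠ y i := by
  by_contra! h
  refine hne ((hA (A.piecewise x y) fun i hi => A.piecewise_eq_of_mem _ _ hi).symm.trans ?_)
  refine hB _ fun i hi => ?_
  by_cases hiA : i ∈ A
  · rw [A.piecewise_eq_of_mem _ _ hiA, h i (Finset.mem_inter.2 ⟨hiA, hi⟩)]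
  · rw [A.piecewise_eq_of_notMem _ _ hiA]

end Blocks

theorem blockSensitivityLE_of_approximates {ι : Type} {α : ι → ℕ} {F : Input ι α → Bool}
    {p : MvPolynomial ι ℝ} (hp : Approximates p (fun x => some (F x)) (1 / 3)) :
    BlockSensitivityLE F (5 * p.totalDegree ^ 2) := by
  intro x 𝓑 hdisj hsens
  choose y hyx hne using fun B : 𝓑 => hsens B B.2
  rw [← Fintype.card_coe]
  refine card_le_five_mul_sq_of_sensitive hp (fun i B B' hB hB' => ?_) hne
  have hmem : i ∈ (B : Finset ι) := not_not.1 fun h => hB (hyx B i h)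
  have hmem' : i ∈ (B' : Finset ι) := not_not.1 fun h => hB' (hyx B' i h)
  exact Subtype.ext (hdisj.elim_finset B.2 B'.2 i hmem hmem')

section DecisionTrees

variable {ι : Type} {α : ι → ℕ} {f : PartialFn ι α} {S : Set (Input ι α)} {R K : ℕ}

/-- Some decision tree of depth at most `R` computes `f` on the domain inputs lying in `S`, the
inputs consistent with the answers received so far. -/
def ComputableOn (f : PartialFn ι α) (S : Set (Input ι α)) (R : ℕ) : Prop :=
  ∃ T : DTree ι α (Option Bool), T.depth ≤ R ∧ ∀ y ∈ S, ∀ b, f y = some b → T.eval y = some b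

theorem ComputableOn.of_const {b : Bool} (h : ∀ y ∈ S, f y ≠ some !b) : ComputableOn f S R := by
  refine ⟨.leaf (some b), Nat.zero_le R, fun y hy b' hb' => ?_⟩
  have : b' ≠ !b := fun hb => h y hy (hb ▸ hb')
  rw [DTree.eval, Bool.eq_not_of_ne this, Bool.not_not]

theorem ComputableOn.of_query (i : ι) (h : ∀ a, ComputableOn f {y ∈ S | y i = a} R) :
    ComputableOn f S (R + 1) := by
  choose T hdepth hT using h
  exact ⟨.node i T, Nat.add_le_add_right (Finset.sup_le fun a _ => hdepth a) 1,
    fun y hy b hb => hT (y i) y ⟨hy, rfl⟩ b hb⟩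

theorem ComputableOn.of_query_finset (A : Finset ι)
    (h : ∀ w : Input ι α, ComputableOn f {y ∈ S | ∀ i ∈ A, y i = w i} R) :
    ComputableOn f S (R + A.card) := by
  classical
  induction A using Finset.induction_on generalizing S with
  | empty =>
    rcases S.eq_empty_or_nonempty with rfl | ⟨w, -⟩
    · exact .of_const (b := false) fun y hy => hy.elim
    · simpa using h w
  | insert i A hi ih =>
    rw [Finset.card_insert_of_notMem hi, ← add_assoc]
    refine .of_query i fun a => ih fun w => ?_
    have hupdate : ∀ j ∈ A, Function.update w i a j = w j := fun j hj =>
      Function.update_of_ne (ne_of_mem_of_not_mem hj hi) _ _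
    convert h (Function.update w i a) using 1
    ext y
    simp +contextual [and_assoc, hupdate]

theorem ComputableOn.mono {R' : ℕ} (h : ComputableOn f S R) (hR : R ≤ R') :
    ComputableOn f S R' :=
  h.imp fun _ hT => ⟨hT.1.trans hR, hT.2⟩

-- Each phase queries a certificate of a 1-input. It meets every certificate of a 0-input in a
-- position where the two conflict, so `B`, the part of the latter that is still open, shrinks.
theorem ComputableOn.of_certificates {A : Input ι α → Finset ι}
    (hcard : ∀ x, f x ≠ none → (A x).card ≤ K) (hcert : ∀ x, f x ≠ none → IsCertificate f x (A x))
    (r : ℕ) (hS : ∀ y ∈ S, f y = some false →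
      ∃ B : Finset ι, B.card ≤ r ∧ ∀ i ∈ A y, i ∉ B → ∀ w ∈ S, w i = y i) :
    ComputableOn f S (r * K) := by
  classical
  have hmeet {S : Set (Input ι α)} {w y} {B : Finset ι} (hw : f w = some true)
      (hy : f y = some false) (hwS : w ∈ S) (hB : ∀ i ∈ A y, i ∉ B → ∀ w ∈ S, w i = y i) :
      ∃ i ∈ A w, i ∈ B := by
    obtain ⟨i, hi, hne⟩ := (hcert w (by simp [hw])).exists_mem_inter_ne (hcert y (by simp [hy]))
      (by simp [hw, hy])
    obtain ⟨hiw, hiy⟩ := Finset.mem_inter.1 hi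
    exact ⟨i, hiw, not_not.1 fun hiB => hne (hB i hiy hiB w hwS)⟩
  induction r generalizing S with
  | zero =>
    by_cases hone : ∃ w ∈ S, f w = some true
    · obtain ⟨w, hwS, hw⟩ := hone
      refine .of_const (b := true) fun y hyS hy => ?_
      obtain ⟨B, hBcard, hB⟩ := hS y hyS hy
      obtain ⟨i, -, hiB⟩ := hmeet hw hy hwS hB
      exact (Finset.card_pos.2 ⟨i, hiB⟩).not_ge hBcard
    · exact .of_const (b := false) fun w hwS hw => hone ⟨w, hwS, hw⟩
  | succ r ih =>
    by_cases hone : ∃ w ∈ S, f w = some true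
    · obtain ⟨w, hwS, hw⟩ := hone
      have hquery := ComputableOn.of_query_finset (A w) fun v =>
        ih (S := {y ∈ S | ∀ i ∈ A w, y i = v i}) fun y ⟨hyS, hyv⟩ hy => ?_
      · exact hquery.mono (Nat.succ_mul r K ▸ Nat.add_le_add_left (hcard w (by simp [hw])) _)
      · obtain ⟨B, hBcard, hB⟩ := hS y hyS hy
        obtain ⟨i, hiw, hiB⟩ := hmeet hw hy hwS hB
        refine ⟨B.erase i, by have := Finset.card_erase_of_mem hiB; lia,
          fun j hj hjB u ⟨huS, huv⟩ => ?_⟩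
        by_cases hji : j = i
        · rw [hji, huv i hiw, hyv i hiw]
        · exact hB j hj (fun h => hjB (Finset.mem_erase.2 ⟨hji, h⟩)) u huS
    · exact .of_const (b := false) fun w hwS hw => hone ⟨w, hwS, hw⟩

theorem Dq_le_sq_of_certificates
    (h : ∀ x, f x ≠ none → ∃ A : Finset ι, A.card ≤ K ∧ IsCertificate f x A) : Dq f ≤ K ^ 2 := by
  classical
  choose! A hcard hcert using h
  obtain ⟨T, hdepth, hT⟩ := ComputableOn.of_certificates (S := Set.univ) hcard hcert K
    fun y _ hy => ⟨A y, hcard y (by simp [hy]), fun i hi hiA => absurd hi hiA⟩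
  exact Nat.sInf_le ⟨T, sq K ▸ hdepth, fun x => hT x (Set.mem_univ x)⟩

end DecisionTrees

section Degrees

open MvPolynomial

theorem exists_eval_eq_of_injective {S σ R : Type*} [Finite S] [Field R] {v : S → σ → R}
    (hv : Function.Injective v) (F : S → R) : ∃ p : MvPolynomial σ R, ∀ s, p.eval (v s) = F s := by
  classical
  cases nonempty_fintype S
  have hseparate (w u : S) : ∃ q : MvPolynomial σ R, q.eval (v w) = 1 ∧
      (u ≠ w → q.eval (v u) = 0) := by
    by_cases h : u = w
    · exact ⟨1, map_one _, fun h' => absurd h h'⟩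
    · obtain ⟨i, hi⟩ := Function.ne_iff.1 (hv.ne h)
      refine ⟨C (v w i - v u i)⁻¹ * (X i - C (v u i)), ?_, fun _ => by simp⟩
      simpa using inv_mul_cancel₀ (sub_ne_zero.2 hi.symm)
  choose q hone hzero using hseparate
  refine ⟨∑ w, C (F w) * ∏ u, q w u, fun s => ?_⟩
  simp only [map_sum, map_mul, map_prod, eval_C]
  rw [Finset.sum_eq_single_of_mem s (Finset.mem_univ s) fun w _ hw => ?_]
  · rw [Finset.prod_eq_one fun u _ => hone s u, mul_one]
  · rw [Finset.prod_eq_zero (Finset.mem_univ s) (hzero w s hw.symm), mul_zero]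

variable {ι : Type} {α : ι → ℕ} {f : PartialFn ι α} {p : MvPolynomial ι ℝ}

theorem Approximates.degq_le (hp : Approximates p f 0) : degq f ≤ p.totalDegree :=
  Nat.sInf_le ⟨p, le_rfl, fun x b hx => sub_eq_zero.1 (abs_nonpos_iff.1 (hp x b hx))⟩

theorem Approximates.adegq_le (hp : Approximates p f (1 / 3)) : adegq f ≤ p.totalDegree :=
  Nat.sInf_le ⟨p, le_rfl, hp⟩

theorem Approximates.mono {ε δ : ℝ} (hp : Approximates p f ε) (h : ε ≤ δ) : Approximates p f δ :=
  fun x b hx => (hp x b hx).trans h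

theorem realCoords_injective : Function.Injective (realCoords (α := α)) := fun _ _ h =>
  funext fun i => Fin.ext (Nat.cast_injective (congrFun h i))

variable [Finite ι]

theorem exists_approximates_zero (f : PartialFn ι α) :
    ∃ p : MvPolynomial ι ℝ, p.totalDegree ≤ degq f ∧ Approximates p f 0 := by
  obtain ⟨q, hq⟩ := exists_eval_eq_of_injective (realCoords_injective (α := α))
    fun x => if f x = some true then 1 else 0
  obtain ⟨p, hdeg, hp⟩ := Nat.sInf_mem (s := {d | ∃ p : MvPolynomial ι ℝ, p.totalDegree ≤ d ∧
    ∀ x b, f x = some b → p.eval (realCoords x) = if b then 1 else 0})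
    ⟨_, q, le_rfl, fun x b hx => by simp [hq, hx]⟩
  exact ⟨p, hdeg, fun x b hx => by rw [hp x b hx, sub_self, abs_zero]⟩

theorem exists_approximates_third (f : PartialFn ι α) :
    ∃ p : MvPolynomial ι ℝ, p.totalDegree ≤ adegq f ∧ Approximates p f (1 / 3) := by
  obtain ⟨q, -, hq⟩ := exists_approximates_zero f
  exact Nat.sInf_mem (s := {d | ∃ p : MvPolynomial ι ℝ, p.totalDegree ≤ d ∧
    Approximates p f (1 / 3)}) ⟨_, q, le_rfl, hq.mono (by norm_num)⟩

theorem adegq_le_degq (f : PartialFn ι α) : adegq f ≤ degq f := by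
  obtain ⟨p, hdeg, hp⟩ := exists_approximates_zero f
  exact (hp.mono (by norm_num)).adegq_le.trans hdeg

end Degrees

section Certification

variable {ι : Type} {α : ι → ℕ} {k : ℕ} {hk : 0 < k} {f : PartialFn ι α}
  {φ : Input ι α → (Fin k → Fin 2) → Bool} {x : Input ι α} {y : Fin k → Fin 2}

/-- The input of `certFn φ` that consists of `x` and the certificate bits `y`. -/
def certInput (x : Input ι α) (y : Fin k → Fin 2) : Input (CertIdx ι k) (certAlphabet α k)
  | .inl i => x i
  | .inr q => y q

theorem IsCertifying.eq_some (hφ : IsCertifying hk f φ) (h : φ x y = true) :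
    f x = some (decide (y ⟨0, hk⟩ = 1)) := by
  cases hx : f x with
  | none => simp [hφ.1 x y hx] at h
  | some b =>
    have hy : y ⟨0, hk⟩ = if b then 1 else 0 := by
      by_contra hne
      simp [hφ.2.1 x y b hx hne] at h
    cases b <;> simp [hy]

theorem IsCertifying.isCertificate_toLeft (hφ : IsCertifying hk f φ) (h : φ x y = true)
    {A : Finset (CertIdx ι k)} (hA : IsCertificate (certFn φ) (certInput x y) A) :
    IsCertificate f x A.toLeft := by
  intro w hw
  have hagree : certFn φ (certInput w y) = certFn φ (certInput x y) := by
    refine hA _ fun i hi => ?_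
    cases i with
    | inl i => exact hw i (Finset.mem_toLeft.2 hi)
    | inr q => rfl
  have haccept : φ w y = true := (Option.some_injective _ hagree).trans h
  rw [hφ.eq_some haccept, hφ.eq_some h]

theorem IsCertifying.Dq_le [Finite ι] (hφ : IsCertifying hk f φ) :
    Dq f ≤ (5 * adegq (certFn φ) ^ 2) ^ 4 := by
  obtain ⟨p, hdeg, hp⟩ := exists_approximates_third (certFn φ)
  refine (Dq_le_sq_of_certificates (K := (5 * p.totalDegree ^ 2) ^ 2) fun x hx => ?_).trans ?_
  · obtain ⟨b, hb⟩ := Option.ne_none_iff_exists'.1 hx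
    obtain ⟨y, hy⟩ := hφ.2.2.1 x b hb
    obtain ⟨A, hcard, hA⟩ :=
      exists_isCertificate_card_le (blockSensitivityLE_of_approximates hp) (certInput x y)
    exact ⟨A.toLeft, A.card_toLeft_le.trans hcard,
      hφ.isCertificate_toLeft hy fun w hw => congrArg some (hA w hw)⟩
  · rw [← pow_mul]
    gcongr

end Certification

section CheatSheetPolynomial

theorem norm_prod_sub_prod_le {γ R : Type*} [NormedCommRing R] [NormOneClass R] (s : Finset γ)
    {a b : γ → R} (ha : ∀ i ∈ s, ‖a i‖ ≤ 1) (hb : ∀ i ∈ s, ‖b i‖ ≤ 1) :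
    ‖∏ i ∈ s, a i - ∏ i ∈ s, b i‖ ≤ ∑ i ∈ s, ‖a i - b i‖ := by
  classical
  induction s using Finset.induction_on with
  | empty => simp
  | insert i s hi ih =>
    obtain ⟨hai, has⟩ := Finset.forall_mem_insert .. |>.1 ha
    obtain ⟨-, hbs⟩ := Finset.forall_mem_insert .. |>.1 hb
    have hprod : ‖∏ j ∈ s, b j‖ ≤ 1 :=
      (s.norm_prod_le b).trans (Finset.prod_le_one (fun _ _ => norm_nonneg _) hbs)
    rw [Finset.prod_insert hi, Finset.prod_insert hi, Finset.sum_insert hi]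
    calc
      _ = ‖(a i - b i) * ∏ j ∈ s, b j + a i * (∏ j ∈ s, a j - ∏ j ∈ s, b j)‖ := by ring_nf
      _ ≤ ‖a i - b i‖ * 1 + 1 * ‖∏ j ∈ s, a j - ∏ j ∈ s, b j‖ :=
        (norm_add_le _ _).trans (add_le_add (norm_mul_le_of_le le_rfl hprod)
          (norm_mul_le_of_le hai le_rfl))
      _ ≤ _ := by simpa using ih has hbs

theorem sum_prod_ite_eq_ite_exists {β γ R : Type*} [Fintype β] [Fintype γ] [CommSemiring R]
    {P : β → γ → Prop} [∀ b i, Decidable (P b i)] [Decidable (∃ b, ∀ i, P b i)]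
    (h : ∀ b b', (∀ i, P b i) → (∀ i, P b' i) → b = b') :
    ∑ b, ∏ i, (if P b i then 1 else 0) = if ∃ b, ∀ i, P b i then (1 : R) else 0 := by
  classical
  simp only [Fintype.prod_boole]
  split_ifs with hex
  · obtain ⟨b, hb⟩ := hex
    rw [Finset.sum_eq_single_of_mem b (Finset.mem_univ b) fun b' _ hne =>
      if_neg fun hb' => hne (h b' b hb' hb), if_pos hb]
  · exact Finset.sum_eq_zero fun b _ => if_neg fun hb => hex ⟨b, hb⟩

open MvPolynomial

/-- The polynomial indicating, for a variable `v` with values `0` and `1`, that `v` has the truth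
value `b`. -/
noncomputable def literal {σ : Type*} (v : σ) (b : Bool) : MvPolynomial σ ℝ :=
  if b then X v else 1 - X v

theorem totalDegree_literal_le {σ : Type*} (v : σ) (b : Bool) : (literal v b).totalDegree ≤ 1 := by
  cases b
  · exact (totalDegree_sub _ _).trans (by simp)
  · simp [literal]

theorem eval_literal {σ : Type*} {u : σ → ℝ} {v : σ} {a : Fin 2} (h : u v = (a : ℕ)) (b : Bool) :
    (literal v b).eval u = if decide (a = 1) = b then 1 else 0 := by
  fin_cases a <;> cases b <;> simp [literal, h]

variable {ι : Type} {α : ι → ℕ} {c k : ℕ}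

/-- The positions in a cheat sheet input of the `i`-th copy of the original input and of the `i`-th
certificate in cell `ℓ`. -/
def csVar (ℓ : Fin (2 ^ c)) (i : Fin c) : CertIdx ι k → CSIdx ι c k
  | .inl j => .inl (i, j)
  | .inr q => .inr (ℓ, i, q)

/-- The contribution of the `i`-th copy to the cell addressed by `b`: the polynomial `p` for the
certifying function, times the indicator that the certified value is `b i`. -/
noncomputable def csFactor (hk : 0 < k) (p : MvPolynomial (CertIdx ι k) ℝ) (b : Fin c → Bool)
    (i : Fin c) : MvPolynomial (CSIdx ι c k) ℝ :=
  rename (csVar (binToFin c b) i) p * literal (.inr (binToFin c b, i, ⟨0, hk⟩)) (b i)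

/-- The polynomial for the cheat sheet version of a function built from a polynomial `p` for the
certifying function: it sums over all cells the product of the contributions of the copies. -/
noncomputable def csPoly (c : ℕ) (hk : 0 < k) (p : MvPolynomial (CertIdx ι k) ℝ) :
    MvPolynomial (CSIdx ι c k) ℝ :=
  ∑ b : Fin c → Bool, ∏ i, csFactor hk p b i

theorem totalDegree_csPoly_le (c : ℕ) (hk : 0 < k) (p : MvPolynomial (CertIdx ι k) ℝ) :
    (csPoly c hk p).totalDegree ≤ c * (p.totalDegree + 1) := by
  refine totalDegree_finsetSum_le fun b _ => (totalDegree_finsetProd _ _).trans ?_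
  refine (Finset.sum_le_card_nsmul _ _ (p.totalDegree + 1) fun i _ => ?_).trans (by simp)
  exact (totalDegree_mul _ _).trans
    (Nat.add_le_add (totalDegree_rename_le _ _) (totalDegree_literal_le _ _))

variable {hk : 0 < k} {f : PartialFn ι α} {φ : Input ι α → (Fin k → Fin 2) → Bool}
  {p : MvPolynomial (CertIdx ι k) ℝ} {ε : ℝ}

theorem eval_csFactor (z : Input (CSIdx ι c k) (csAlphabet α c k)) (b : Fin c → Bool) (i : Fin c) :
    (csFactor hk p b i).eval (realCoords z) =
      p.eval (realCoords (certInput (csX z i) (csY z (binToFin c b) i))) *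
        if decide (csY z (binToFin c b) i ⟨0, hk⟩ = 1) = b i then 1 else 0 := by
  have hcoords : realCoords z ∘ csVar (binToFin c b) i =
      realCoords (certInput (csX z i) (csY z (binToFin c b) i)) := by
    ext (j | q) <;> rfl
  have hcell : realCoords z (.inr (binToFin c b, i, ⟨0, hk⟩)) =
    (csY z (binToFin c b) i ⟨0, hk⟩ : ℕ) := rfl
  rw [csFactor, map_mul, eval_rename, hcoords, eval_literal hcell]

theorem abs_eval_csFactor_le_one
    (hp : ∀ w : Input (CertIdx ι k) (certAlphabet α k), |p.eval (realCoords w)| ≤ 1)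
    (z : Input (CSIdx ι c k) (csAlphabet α c k)) (b : Fin c → Bool) (i : Fin c) :
    |(csFactor hk p b i).eval (realCoords z)| ≤ 1 := by
  rw [eval_csFactor]
  split_ifs
  · simpa using hp _
  · simp

theorem IsCertifying.abs_eval_csFactor_sub_le (hφ : IsCertifying hk f φ)
    (hp : Approximates p (certFn φ) ε) (z : Input (CSIdx ι c k) (csAlphabet α c k))
    (b : Fin c → Bool) (i : Fin c) :
    |(csFactor hk p b i).eval (realCoords z) -
      if f (csX z i) = some (b i) ∧ φ (csX z i) (csY z (binToFin c b) i) = true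
        then 1 else 0| ≤ ε := by
  have happrox : |p.eval (realCoords (certInput (csX z i) (csY z (binToFin c b) i))) -
      if φ (csX z i) (csY z (binToFin c b) i) = true then 1 else 0| ≤ ε := hp _ _ rfl
  have hvalue : (f (csX z i) = some (b i) ∧ φ (csX z i) (csY z (binToFin c b) i) = true) ↔
      decide (csY z (binToFin c b) i ⟨0, hk⟩ = 1) = b i ∧
        φ (csX z i) (csY z (binToFin c b) i) = true :=
    and_congr_left fun h => by rw [hφ.eq_some h, Option.some_inj]
  simp only [hvalue, eval_csFactor]
  by_cases hbit : decide (csY z (binToFin c b) i ⟨0, hk⟩ = 1) = b i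
  · simpa only [hbit, true_and, if_true, mul_one] using happrox
  · simpa [hbit] using (abs_nonneg _).trans happrox

theorem ofProp_eq_true_iff {P : Prop} : ofProp P = true ↔ P :=
  @decide_eq_true_iff P (Classical.propDecidable P)

theorem ite_ofProp_CSCond_eq_sum_prod (z : Input (CSIdx ι c k) (csAlphabet α c k)) :
    (if ofProp (CSCond f φ z) then (1 : ℝ) else 0) = ∑ b : Fin c → Bool, ∏ i,
      if f (csX z i) = some (b i) ∧ φ (csX z i) (csY z (binToFin c b) i) = true
        then 1 else 0 := by
  rw [sum_prod_ite_eq_ite_exists]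
  · exact if_congr (by simp only [ofProp_eq_true_iff, CSCond, forall_and]) rfl rfl
  · intro b b' hb hb'
    ext1 i
    exact Option.some_injective _ ((hb i).1.symm.trans (hb' i).1)

theorem IsCertifying.approximates_csPoly (hφ : IsCertifying hk f φ)
    (hp : Approximates p (certFn φ) ε)
    (hbound : ∀ w : Input (CertIdx ι k) (certAlphabet α k), |p.eval (realCoords w)| ≤ 1) :
    Approximates (csPoly c hk p) (cheatSheet c f φ) (2 ^ c * (c * ε)) := by
  intro z v hv
  have hsum : (csPoly c hk p).eval (realCoords z) =
      ∑ b : Fin c → Bool, ∏ i, (csFactor hk p b i).eval (realCoords z) := by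
    simp only [csPoly, map_sum, map_prod]
  rw [← Option.some_injective _ hv, ite_ofProp_CSCond_eq_sum_prod, hsum, ← Finset.sum_sub_distrib]
  refine (Finset.abs_sum_le_sum_abs _ _).trans ?_
  refine (Finset.sum_le_card_nsmul _ _ (c * ε) fun b _ => ?_).trans (by simp)
  rw [← Real.norm_eq_abs]
  refine (norm_prod_sub_prod_le _ (fun i _ => abs_eval_csFactor_le_one hbound z b i)
    fun i _ => ?_).trans ?_
  · split_ifs <;> simp
  · refine (Finset.sum_le_card_nsmul _ _ ε fun i _ => ?_).trans (by simp)
    exact hφ.abs_eval_csFactor_sub_le hp z b i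

end CheatSheetPolynomial

section ErrorReduction

open Polynomial

/-- The probability, as a polynomial in `t`, that at least `s` of `2 * s` independent coins of bias
`t` show heads. -/
noncomputable def majorityPoly (s : ℕ) : ℝ[X] :=
  ∑ k ∈ Finset.Ico s (2 * s + 1), bernsteinPolynomial ℝ (2 * s) k

theorem natDegree_bernsteinPolynomial_le {R : Type*} [CommRing R] {n k : ℕ} (hk : k ≤ n) :
    (bernsteinPolynomial R n k).natDegree ≤ n := by
  rw [bernsteinPolynomial]
  compute_degree
  lia

theorem natDegree_majorityPoly_le (s : ℕ) : (majorityPoly s).natDegree ≤ 2 * s :=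
  natDegree_sum_le_of_forall_le _ _ fun _ hk =>
    natDegree_bernsteinPolynomial_le (Nat.lt_succ_iff.1 (Finset.mem_Ico.1 hk).2)

theorem eval_bernsteinPolynomial {R : Type*} [CommRing R] (n k : ℕ) (t : R) :
    (bernsteinPolynomial R n k).eval t = n.choose k * (t ^ k * (1 - t) ^ (n - k)) := by
  simp [bernsteinPolynomial, mul_assoc]

theorem sum_eval_bernsteinPolynomial_le {s : ℕ} {t : ℝ} {A : Finset ℕ}
    (hA : A ⊆ Finset.range (2 * s + 1)) (h0 : 0 ≤ t * (1 - t))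
    (h : ∀ k ∈ A, t ^ k * (1 - t) ^ (2 * s - k) ≤ (t * (1 - t)) ^ s) :
    ∑ k ∈ A, (bernsteinPolynomial ℝ (2 * s) k).eval t ≤ (4 * (t * (1 - t))) ^ s :=
  calc
    _ ≤ ∑ k ∈ A, ((2 * s).choose k : ℝ) * (t * (1 - t)) ^ s := Finset.sum_le_sum fun k hk => by
      rw [eval_bernsteinPolynomial]
      exact mul_le_mul_of_nonneg_left (h k hk) (Nat.cast_nonneg _)
    _ ≤ ∑ k ∈ Finset.range (2 * s + 1), ((2 * s).choose k : ℝ) * (t * (1 - t)) ^ s :=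
      Finset.sum_le_sum_of_subset_of_nonneg hA fun _ _ _ =>
        mul_nonneg (Nat.cast_nonneg _) (pow_nonneg h0 s)
    _ = (4 * (t * (1 - t))) ^ s := by
      rw [← Finset.sum_mul, ← Nat.cast_sum, Nat.sum_range_choose, mul_pow, pow_mul]
      norm_num [mul_pow]

theorem pow_mul_pow_le_mul_pow {x y : ℝ} (hx : 0 ≤ x) (hxy : x ≤ y) {s k : ℕ} (hsk : s ≤ k)
    (hk : k ≤ 2 * s) : x ^ k * y ^ (2 * s - k) ≤ (x * y) ^ s := by
  obtain ⟨j, rfl⟩ := Nat.exists_eq_add_of_le hsk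
  calc
    _ = x ^ s * (x ^ j * y ^ (2 * s - (s + j))) := by rw [pow_add, mul_assoc]
    _ ≤ x ^ s * (y ^ j * y ^ (2 * s - (s + j))) := by
      have := hx.trans hxy
      gcongr
    _ = (x * y) ^ s := by
      rw [← pow_add, mul_pow]
      congr 2
      lia

variable {s : ℕ} {t : ℝ}

theorem eval_majorityPoly_le (h0 : 0 ≤ t) (ht : t ≤ 1 / 2) :
    (majorityPoly s).eval t ≤ (4 * (t * (1 - t))) ^ s := by
  rw [majorityPoly, eval_finsetSum]
  refine sum_eval_bernsteinPolynomial_le (fun k hk => ?_) (by nlinarith) fun k hk => ?_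
  · exact Finset.mem_range.2 (Finset.mem_Ico.1 hk).2
  · obtain ⟨hsk, hk⟩ := Finset.mem_Ico.1 hk
    exact pow_mul_pow_le_mul_pow h0 (by linarith) hsk (Nat.lt_succ_iff.1 hk)

theorem one_sub_eval_majorityPoly (s : ℕ) (t : ℝ) : 1 - (majorityPoly s).eval t =
    ∑ k ∈ Finset.range s, (bernsteinPolynomial ℝ (2 * s) k).eval t := by
  have hsplit := Finset.sum_range_add_sum_Ico (fun k => bernsteinPolynomial ℝ (2 * s) k)
    (show s ≤ 2 * s + 1 by lia)
  rw [bernsteinPolynomial.sum] at hsplit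
  rw [← eval_finsetSum, eq_sub_of_add_eq hsplit, eval_sub, eval_one, majorityPoly]

theorem one_sub_eval_majorityPoly_le (ht : 1 / 2 ≤ t) (h1 : t ≤ 1) :
    1 - (majorityPoly s).eval t ≤ (4 * (t * (1 - t))) ^ s := by
  rw [one_sub_eval_majorityPoly]
  refine sum_eval_bernsteinPolynomial_le (fun k hk => ?_) (by nlinarith) fun k hk => ?_
  · rw [Finset.mem_range] at hk ⊢
    lia
  · rw [Finset.mem_range] at hk
    have := pow_mul_pow_le_mul_pow (sub_nonneg.2 h1) (show 1 - t ≤ t by linarith)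
      (show s ≤ 2 * s - k by lia) (Nat.sub_le _ _)
    rwa [Nat.sub_sub_self (by lia), mul_comm, mul_comm (1 - t)] at this

theorem eval_majorityPoly_mem_Icc (ht : t ∈ Set.Icc (0 : ℝ) 1) :
    (majorityPoly s).eval t ∈ Set.Icc (0 : ℝ) 1 := by
  have hnonneg (A : Finset ℕ) : 0 ≤ ∑ k ∈ A, (bernsteinPolynomial ℝ (2 * s) k).eval t := by
    refine Finset.sum_nonneg fun k _ => ?_
    rw [eval_bernsteinPolynomial]
    have := sub_nonneg.2 ht.2
    have := ht.1
    positivity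
  refine ⟨?_, sub_nonneg.1 ((one_sub_eval_majorityPoly s t).symm ▸ hnonneg _)⟩
  rw [majorityPoly, eval_finsetSum]
  exact hnonneg _

theorem abs_eval_majorityPoly_sub_le (ht : t ∈ Set.Icc (0 : ℝ) 1) {b : Bool}
    (hb : |t - if b then 1 else 0| ≤ 1 / 2) :
    |(majorityPoly s).eval t - if b then 1 else 0| ≤ (4 * (t * (1 - t))) ^ s := by
  obtain ⟨h0, h1⟩ := eval_majorityPoly_mem_Icc (s := s) ht
  have hb := abs_le.1 hb
  cases b with
  | false =>
    simp only [Bool.false_eq_true, if_false, sub_zero] at hb ⊢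
    rw [abs_of_nonneg h0]
    exact eval_majorityPoly_le ht.1 hb.2
  | true =>
    simp only [if_true] at hb ⊢
    rw [abs_sub_comm, abs_of_nonneg (sub_nonneg.2 h1)]
    exact one_sub_eval_majorityPoly_le (by linarith) ht.2

-- The substitution `t ↦ 3 / 5 * (t + 1 / 3)` maps the range `[-1 / 3, 4 / 3]` onto `[0, 1]` and
-- keeps the distance to the target at most `2 / 5`, whence `4 * u * (1 - u) ≤ 24 / 25`; the factor
-- `18` comes from `(24 / 25) ^ 18 ≤ 1 / 2`.
theorem exists_amplifying_polynomial (m : ℕ) : ∃ Q : ℝ[X], Q.natDegree ≤ 36 * m ∧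
    ∀ (t : ℝ) (b : Bool), |t - if b then 1 else 0| ≤ 1 / 3 →
      |Q.eval t| ≤ 1 ∧ |Q.eval t - if b then 1 else 0| ≤ (1 / 2) ^ m := by
  refine ⟨(majorityPoly (18 * m)).comp (C (3 / 5) * (X + C (1 / 3))), ?_, fun t b ht => ?_⟩
  · refine natDegree_comp_le.trans ?_
    have hlin : (C (3 / 5 : ℝ) * (X + C (1 / 3))).natDegree ≤ 1 := by compute_degree
    calc
      _ ≤ 2 * (18 * m) * 1 := Nat.mul_le_mul (natDegree_majorityPoly_le _) hlin
      _ = 36 * m := by ring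
  rw [eval_comp, eval_mul, eval_add, eval_C, eval_C, eval_X]
  set u := 3 / 5 * (t + 1 / 3) with hu
  obtain ⟨hmem, hdist⟩ : u ∈ Set.Icc (0 : ℝ) 1 ∧ |u - if b then 1 else 0| ≤ 2 / 5 := by
    rw [abs_le] at ht ⊢
    cases b <;> norm_num at ht ⊢ <;> constructor <;> constructor <;> linarith
  have hvariance : 4 * (u * (1 - u)) ≤ 24 / 25 := by
    rw [abs_le] at hdist
    cases b <;> norm_num at hdist <;> nlinarith
  obtain ⟨h0, h1⟩ := eval_majorityPoly_mem_Icc (s := 18 * m) hmem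
  refine ⟨abs_le.2 ⟨by linarith, h1⟩, ?_⟩
  calc
    _ ≤ (4 * (u * (1 - u))) ^ (18 * m) :=
      abs_eval_majorityPoly_sub_le hmem (hdist.trans (by norm_num))
    _ ≤ (24 / 25 : ℝ) ^ (18 * m) :=
      pow_le_pow_left₀ (by nlinarith [hmem.1, hmem.2]) hvariance _
    _ ≤ (1 / 2) ^ m := by
      rw [pow_mul]
      gcongr
      norm_num

theorem totalDegree_aeval_le {σ R : Type*} [CommSemiring R] (Q : R[X]) (p : MvPolynomial σ R) :
    (aeval p Q).totalDegree ≤ Q.natDegree * p.totalDegree := by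
  rw [aeval_eq_sum_range]
  refine MvPolynomial.totalDegree_finsetSum_le fun i hi => ?_
  exact (MvPolynomial.totalDegree_smul_le _ _).trans ((MvPolynomial.totalDegree_pow _ _).trans
    (Nat.mul_le_mul_right _ (Nat.lt_succ_iff.1 (Finset.mem_range.1 hi))))

theorem Approximates.exists_amplified {ι : Type} {α : ι → ℕ} {f : PartialFn ι α}
    {p : MvPolynomial ι ℝ} (hp : Approximates p f (1 / 3)) (m : ℕ) :
    ∃ q : MvPolynomial ι ℝ, q.totalDegree ≤ 36 * m * p.totalDegree ∧
      Approximates q f ((1 / 2) ^ m) ∧ ∀ x, f x ≠ none → |q.eval (realCoords x)| ≤ 1 := by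
  obtain ⟨Q, hQdeg, hQ⟩ := exists_amplifying_polynomial m
  have heval (x : Input ι α) :
      (aeval p Q).eval (realCoords x) = Q.eval (p.eval (realCoords x)) := by
    rw [aeval_def, hom_eval₂, ← eval₂_id]
    congr
    ext
    simp
  refine ⟨aeval p Q, (totalDegree_aeval_le Q p).trans (Nat.mul_le_mul_right _ hQdeg),
    fun x b hx => ?_, fun x hx => ?_⟩
  · rw [heval]
    exact (hQ _ b (hp x b hx)).2
  · obtain ⟨b, hb⟩ := Option.ne_none_iff_exists'.1 hx
    rw [heval]
    exact (hQ _ b (hp x b hb)).1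

end ErrorReduction

section Bounds

variable {ι : Type} [Finite ι] {α : ι → ℕ} {k : ℕ} {hk : 0 < k} {f : PartialFn ι α}
  {φ : Input ι α → (Fin k → Fin 2) → Bool}

theorem IsCertifying.degq_cheatSheet_le (hφ : IsCertifying hk f φ) (c : ℕ) :
    degq (cheatSheet c f φ) ≤ c * (degq (certFn φ) + 1) := by
  obtain ⟨p, hdeg, hp⟩ := exists_approximates_zero (certFn φ)
  have hbound (w : Input (CertIdx ι k) (certAlphabet α k)) : |p.eval (realCoords w)| ≤ 1 := by
    rw [sub_eq_zero.1 (abs_nonpos_iff.1 (hp w _ rfl))]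
    split_ifs <;> simp
  have happrox := hφ.approximates_csPoly (c := c) hp hbound
  rw [mul_zero, mul_zero] at happrox
  calc
    _ ≤ c * (p.totalDegree + 1) := happrox.degq_le.trans (totalDegree_csPoly_le c hk p)
    _ ≤ c * (degq (certFn φ) + 1) := by gcongr

theorem IsCertifying.adegq_cheatSheet_le (hφ : IsCertifying hk f φ) (c : ℕ) :
    adegq (cheatSheet c f φ) ≤ c * (72 * (c + 1) * adegq (certFn φ) + 1) := by
  obtain ⟨p, hdeg, hp⟩ := exists_approximates_third (certFn φ)
  obtain ⟨q, hqdeg, hq, hbound⟩ := hp.exists_amplified (2 * (c + 1))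
  have herror : (2 ^ c * (c * (1 / 2) ^ (2 * (c + 1))) : ℝ) ≤ 1 / 3 := by
    have hc : (c : ℝ) ≤ 2 ^ c := mod_cast Nat.lt_two_pow_self.le
    calc
      (2 ^ c * (c * (1 / 2) ^ (2 * (c + 1))) : ℝ) ≤ 2 ^ c * (2 ^ c * (1 / 2) ^ (2 * (c + 1))) := by
        gcongr
      _ = 2 ^ (2 * c) * (1 / 2) ^ (2 * c) * (1 / 4) := by ring
      _ ≤ 1 / 3 := by
        rw [← mul_pow]
        norm_num
  have happrox :=
    (hφ.approximates_csPoly (c := c) hq fun w => hbound w (by simp [certFn])).mono herror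
  calc
    _ ≤ c * (q.totalDegree + 1) := happrox.adegq_le.trans (totalDegree_csPoly_le c hk q)
    _ ≤ c * (36 * (2 * (c + 1)) * adegq (certFn φ) + 1) := by
      gcongr
      exact hqdeg.trans (Nat.mul_le_mul_left _ hdeg)
    _ = c * (72 * (c + 1) * adegq (certFn φ) + 1) := by ring

theorem one_half_le_log {a : ℝ} (ha : 2 ≤ a) : 1 / 2 ≤ Real.log a := by
  have := Real.log_two_gt_d9
  linarith [Real.log_le_log two_pos ha]

theorem clog_two_le_log_of_le_pow {a r D : ℕ} (ha : 2 ≤ a) (hD : D ≤ a ^ r) :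
    (Nat.clog 2 D : ℝ) ≤ 2 * (r + 1) * Real.log a := by
  have hone : 1 ≤ Real.logb 2 a := by
    rw [Real.le_logb_iff_rpow_le one_lt_two (by positivity), Real.rpow_one]
    exact_mod_cast ha
  have hlog : Real.logb 2 a ≤ 2 * Real.log a := by
    rw [Real.logb, div_le_iff₀ (Real.log_pos one_lt_two)]
    nlinarith [one_half_le_log le_rfl, Real.log_natCast_nonneg a]
  calc
    (Nat.clog 2 D : ℝ) ≤ Nat.clog 2 (a ^ r) := mod_cast Nat.clog_mono_right 2 hD
    _ = ⌈r * Real.logb 2 a⌉₊ := by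
      rw [← Real.natCeil_logb_natCast, Nat.cast_pow, Real.logb_pow, Nat.cast_ofNat]
    _ ≤ r * Real.logb 2 a + 1 := (Nat.ceil_lt_add_one (by positivity)).le
    _ ≤ (r + 1) * Real.logb 2 a := by linarith
    _ ≤ (r + 1) * (2 * Real.log a) := by gcongr
    _ = 2 * (r + 1) * Real.log a := by ring

theorem IsCertifying.ten_mul_clog_Dq_le (hφ : IsCertifying hk f φ) {d : ℕ}
    (hd : adegq (certFn φ) ≤ d) : ((10 * Nat.clog 2 (Dq f) : ℕ) : ℝ) ≤ 260 * Real.log (d + 2) := by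
  have hD : Dq f ≤ (d + 2) ^ 12 :=
    calc
      _ ≤ (5 * d ^ 2) ^ 4 := hφ.Dq_le.trans (by gcongr)
      _ ≤ ((d + 2) ^ 3) ^ 4 := by
        gcongr
        nlinarith
      _ = (d + 2) ^ 12 := by ring
  have hclog := clog_two_le_log_of_le_pow (by lia) hD
  push_cast at hclog ⊢
  linarith

theorem mul_le_polylog {c d L : ℝ} (hc : 0 ≤ c) (hd : 0 ≤ d) (hL : 1 / 2 ≤ L) (hcL : c ≤ 260 * L) :
    c * (72 * (c + 1) * d + 1) ≤ 260 * (72 * 262) * (d + 2) * L ^ 2 :=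
  calc
    _ ≤ 260 * L * (72 * (262 * L) * d + 2 * L) := by
      gcongr <;> linarith
    _ ≤ 260 * (72 * 262) * (d + 2) * L ^ 2 := by nlinarith [sq_nonneg L]

end Bounds

end QC

theorem cheat_sheet_degree_upper_bounds_general :
    ∃ (C : ℝ) (e : ℕ), 0 < C ∧ ∀ {ι : Type} [Finite ι] {α : ι → ℕ} {k : ℕ} (hk : 0 < k)
      (f : QC.PartialFn ι α) (φ : QC.Input ι α → (Fin k → Fin 2) → Bool),
      QC.IsCertifying hk f φ →
      (QC.degq (QC.cheatSheet (10 * Nat.clog 2 (QC.Dq f)) f φ) : ℝ) ≤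
          C * ((QC.degq (QC.certFn φ) : ℝ) + 2) *
            (Real.log ((QC.degq (QC.certFn φ) : ℝ) + 2)) ^ e ∧
      (QC.adegq (QC.cheatSheet (10 * Nat.clog 2 (QC.Dq f)) f φ) : ℝ) ≤
          C * ((QC.adegq (QC.certFn φ) : ℝ) + 2) *
            (Real.log ((QC.adegq (QC.certFn φ) : ℝ) + 2)) ^ e := by
  refine ⟨260 * (72 * 262), 2, by norm_num, fun {ι _ α k} hk f φ hφ => ?_⟩
  set c := 10 * Nat.clog 2 (QC.Dq f)
  have hbound {N d : ℕ} (hd : QC.adegq (QC.certFn φ) ≤ d) (hN : N ≤ c * (72 * (c + 1) * d + 1)) :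
      (N : ℝ) ≤ 260 * (72 * 262) * ((d : ℝ) + 2) * Real.log ((d : ℝ) + 2) ^ 2 :=
    (Nat.cast_le.2 hN).trans (by
      push_cast
      exact QC.mul_le_polylog (by positivity) (by positivity)
        (QC.one_half_le_log (by linarith [d.cast_nonneg (α := ℝ)])) (hφ.ten_mul_clog_Dq_le hd))
  refine ⟨hbound (QC.adegq_le_degq _) ((hφ.degq_cheatSheet_le c).trans ?_),
    hbound le_rfl (hφ.adegq_cheatSheet_le c)⟩
  gcongr
  nlinarith

/-- Degree upper bounds for cheat sheet functions (with
`c = ⌈10·log₂ D(f)⌉` copies): `deg(f_CS) = Õ(deg(φ))` and `adeg(f_CS) = Õ(adeg(φ))`,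
independently of the degree of `f` itself. -/
theorem cheat_sheet_degree_upper_bounds :
    ∃ (C : ℝ) (e : ℕ), 0 < C ∧ ∀ (n k : ℕ) (hk : 0 < k)
      (f : QC.PartialFn (Fin n) fun _ => 2)
      (φ : QC.Input (Fin n) (fun _ => 2) → (Fin k → Fin 2) → Bool),
      QC.IsCertifying hk f φ →
      (QC.degq (QC.cheatSheet (10 * Nat.clog 2 (QC.Dq f)) f φ) : ℝ) ≤
          C * ((QC.degq (QC.certFn φ) : ℝ) + 2) *
            (Real.log ((QC.degq (QC.certFn φ) : ℝ) + 2)) ^ e ∧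
      (QC.adegq (QC.cheatSheet (10 * Nat.clog 2 (QC.Dq f)) f φ) : ℝ) ≤
          C * ((QC.adegq (QC.certFn φ) : ℝ) + 2) *
            (Real.log ((QC.adegq (QC.certFn φ) : ℝ) + 2)) ^ e := by
  obtain ⟨C, e, hC, h⟩ := cheat_sheet_degree_upper_bounds_general
  exact ⟨C, e, hC, fun n k hk f φ => h hk f φ⟩
end

section
/- There exists a family of total Boolean functions f (one for each input size, with input size growing to infinity) such that R(f) = Ω̃(Q_E(f)^{3/2}), i.e., the bounded-error randomized query complexity of f is at least the 1.5-th power of its exact quantum query complexity, up to factors polylogarithmic in the input size. -/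
open scoped BigOperators ENNReal

/-! The separating function reads two bit matrices with `2 ^ L` rows and `N` columns, and `N ^ 2`
cells, one for each pair of a column of the first matrix and a column of the second. It is true when
there are a column with only ones in the first matrix and one in the second such that the cell of
this pair certifies that they are the only ones, by being flagged and by pointing to a zero in every
other column.

A randomized algorithm cannot look at all cells. To find the right one it has to recognize two
all-ones columns hidden among columns with a single zero each, and eliminating a column takes about
`2 ^ L` queries, so the cost is of order `2 ^ L * N` as long as `N` is at least `2 ^ L`. A quantum
algorithm runs exact Grover search in both matrices in parallel, with about `√N` phases of `2 ^ L`
queries each, and then checks the cell found with about `N * L` queries. Exactness is possible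
because uniqueness is part of the certificate: if no pair of columns is certified, the check rejects
whatever the search returns. For `N = 4 ^ L` the two costs are `8 ^ L` and, up to a logarithmic
factor, `4 ^ L`. -/

namespace QC

/-! ### Decision trees -/

section Trees

variable {ι : Type} {α : ι → ℕ} {L M : Type}

/-- The positions that a tree queries on an input, in order and with multiplicity. -/
def DTree.queries : DTree ι α L → Input ι α → List ι
  | .leaf _, _ => []
  | .node i c, x => i :: (c (x i)).queries x

theorem DTree.depth_child_lt (i : ι) (c : Fin (α i) → DTree ι α L) (a : Fin (α i)) :
    (c a).depth < (DTree.node i c).depth :=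
  Nat.lt_succ_of_le (Finset.le_sup (f := fun a => (c a).depth) (Finset.mem_univ a))

theorem DTree.length_queries_le_depth (T : DTree ι α L) (x : Input ι α) :
    (T.queries x).length ≤ T.depth := by
  induction T with
  | leaf l => exact le_rfl
  | node i c ih => exact Nat.succ_le_of_lt ((ih (x i)).trans_lt (DTree.depth_child_lt i c (x i)))

theorem DTree.eval_congr {x x' : Input ι α} (T : DTree ι α L)
    (h : ∀ i ∈ T.queries x, x i = x' i) : T.eval x = T.eval x' := by
  induction T with
  | leaf l => rfl
  | node i c ih =>
    simp only [DTree.queries, List.forall_mem_cons] at h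
    simp only [DTree.eval, ← h.1]
    exact ih _ h.2

/-- Sequential composition: the tree `T` followed by the tree that `f` assigns to its output. -/
def DTree.bind (f : L → DTree ι α M) : DTree ι α L → DTree ι α M
  | .leaf l => f l
  | .node i c => .node i fun a => (c a).bind f

theorem DTree.eval_bind (f : L → DTree ι α M) (T : DTree ι α L) (x : Input ι α) :
    (T.bind f).eval x = (f (T.eval x)).eval x := by
  induction T with
  | leaf l => rfl
  | node i _ ih => exact ih (x i)

theorem DTree.depth_bind_le {k : ℕ} {f : L → DTree ι α M} (hf : ∀ l, (f l).depth ≤ k)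
    (T : DTree ι α L) : (T.bind f).depth ≤ T.depth + k := by
  induction T with
  | leaf l => simpa only [DTree.bind, DTree.depth, zero_add] using hf l
  | node i c ih =>
    simp only [DTree.bind, DTree.depth]
    rw [add_right_comm]
    exact Nat.succ_le_succ <| Finset.sup_le fun a _ => (ih a).trans <|
      Nat.add_le_add_right (Finset.le_sup (f := fun a => (c a).depth) (Finset.mem_univ a)) k

/-- The function `g` of the input is computed by a decision tree of depth at most `k`. -/
def TreeComputable (k : ℕ) (g : Input ι α → L) : Prop :=
  ∃ T : DTree ι α L, T.depth ≤ k ∧ ∀ x, T.eval x = g x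

namespace TreeComputable

theorem const (l : L) : TreeComputable 0 fun _ : Input ι α => l :=
  ⟨.leaf l, le_rfl, fun _ => rfl⟩

theorem query (i : ι) : TreeComputable 1 fun x : Input ι α => x i :=
  ⟨.node i .leaf, by simp [DTree.depth], fun _ => rfl⟩

theorem mono {k k' : ℕ} {g : Input ι α → L} (h : TreeComputable k g) (hk : k ≤ k') :
    TreeComputable k' g :=
  let ⟨T, hT, hTg⟩ := h
  ⟨T, hT.trans hk, hTg⟩

theorem bind {k k' : ℕ} {g : Input ι α → L} (hg : TreeComputable k g)
    {f : L → Input ι α → M} (hf : ∀ l, TreeComputable k' (f l)) :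
    TreeComputable (k + k') fun x => f (g x) x := by
  obtain ⟨T, hT, hTg⟩ := hg
  choose F hF hFf using hf
  exact ⟨T.bind F, (T.depth_bind_le hF).trans (Nat.add_le_add_right hT _),
    fun x => by rw [DTree.eval_bind, hFf, hTg]⟩

theorem map {k : ℕ} {g : Input ι α → L} (hg : TreeComputable k g) (f : L → M) :
    TreeComputable k fun x => f (g x) :=
  hg.bind fun l => const (f l)

theorem map₂ {k k' : ℕ} {g : Input ι α → L} {g' : Input ι α → M} {O : Type}
    (hg : TreeComputable k g) (hg' : TreeComputable k' g') (f : L → M → O) :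
    TreeComputable (k + k') fun x => f (g x) (g' x) :=
  hg.bind fun l => hg'.map (f l)

theorem pi_fin {N k : ℕ} {A : Fin N → Type} {g : ∀ j, Input ι α → A j}
    (h : ∀ j, TreeComputable k (g j)) : TreeComputable (N * k) fun x j => g j x := by
  induction N with
  | zero => rw [Nat.zero_mul]; convert const (ι := ι) (α := α) (fun j : Fin 0 => j.elim0) using 2
  | succ N ih =>
    rw [Nat.succ_mul]
    convert (ih fun j => h j.succ).map₂ (h 0) (fun t a => Fin.cons (α := A) a t) using 2 with x
    exact (Fin.cons_self_tail fun j => g j x).symm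

theorem pi {J : Type} [Fintype J] {k : ℕ} {A : J → Type} {g : ∀ j, Input ι α → A j}
    (h : ∀ j, TreeComputable k (g j)) : TreeComputable (Fintype.card J * k) fun x j => g j x := by
  let e := (Fintype.equivFin J).symm
  convert (pi_fin fun j => h (e j)).map (Equiv.piCongrLeft A e) using 2 with x
  exact ((Equiv.piCongrLeft A e).apply_symm_apply fun j => g j x).symm

theorem of_fintype [Fintype ι] (g : Input ι α → L) : TreeComputable (Fintype.card ι) g := by
  simpa only [mul_one] using (pi (query (α := α))).map g

theorem ofProp_and {k k' : ℕ} {P P' : Input ι α → Prop}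
    (h : TreeComputable k fun x => ofProp (P x)) (h' : TreeComputable k' fun x => ofProp (P' x)) :
    TreeComputable (k + k') fun x => ofProp (P x ∧ P' x) := by
  convert h.map₂ h' and using 2
  exact @Bool.decide_and _ _ (_) (_) (_)

theorem ofProp_forall {J : Type} [Fintype J] {k : ℕ} {P : J → Input ι α → Prop}
    (h : ∀ j, TreeComputable k fun x => ofProp (P j x)) :
    TreeComputable (Fintype.card J * k) fun x => ofProp (∀ j, P j x) := by
  convert (pi h).map fun b => ofProp (∀ j, b j = true) using 3
  simp only [ofProp, decide_eq_true_eq]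

end TreeComputable

end Trees

/-! ### Lower bounds for randomized query complexity -/

section Randomized

variable {ι κ : Type} {α : ι → ℕ} {L : Type}

theorem card_smul_sum_eq_sum_update {Q M : Type} {R : Q → Type} [Fintype Q] [DecidableEq Q]
    [∀ q, Fintype (R q)] [AddCommMonoid M] (F : (∀ q, R q) → M) (q : Q) :
    Fintype.card (R q) • ∑ y, F y = ∑ y, ∑ r, F (Function.update y q r) := by
  have hswap : Function.Involutive fun p : (∀ q, R q) × R q =>
      (Function.update p.1 q p.2, p.1 q) := fun p => by simp
  calc Fintype.card (R q) • ∑ y, F y = ∑ p : (∀ q, R q) × R q, F p.1 := by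
        simp [Fintype.sum_prod_type, Finset.smul_sum]
    _ = ∑ p : (∀ q, R q) × R q, F (Function.update p.1 q p.2) :=
        ((Equiv.sum_comp hswap.toPerm fun p => F p.1).symm)
    _ = ∑ y, ∑ r, F (Function.update y q r) := Fintype.sum_prod_type _

theorem sum_countP_eq_length {Q : Type} [Fintype Q] [DecidableEq Q] (label : ι → Q) (l : List ι) :
    ∑ q, l.countP (fun i => label i = q) = l.length := by
  simpa [List.count, List.countP_map, Function.comp_def, beq_eq_decide] using
    Multiset.sum_count_eq_card (s := Finset.univ) (m := (l.map label : Multiset Q))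
      fun _ _ => Finset.mem_univ _

theorem DTree.queries_node_update [DecidableEq ι] {i j : ι} (h : j ≠ i)
    (c : Fin (α i) → DTree ι α L) (b : Input ι α) (v : Fin (α j)) :
    (DTree.node i c).queries (Function.update b j v) =
      i :: (c (b i)).queries (Function.update b j v) := by
  rw [DTree.queries, Function.update_of_ne h.symm]

/-- Until the `r`-th run meets `p r` it coincides with the run on `b`. So if `p r` is the `t`-th
of the positions `p` met on `b`, then the `r`-th run makes at least `t` queries into `A`. -/
theorem DTree.card_mem_queries_mul_card_le [DecidableEq ι] {R : Type} {p : R → ι}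
    (hp : Function.Injective p) (b : Input ι α) (v : ∀ r, Fin (α (p r)))
    {A : ι → Prop} [DecidablePred A] (hA : ∀ r, A (p r)) (T : DTree ι α L) (S : Finset R) :
    (S.filter fun r => p r ∈ T.queries (Function.update b (p r) (v r))).card * S.card ≤
      2 * ∑ r ∈ S, (T.queries (Function.update b (p r) (v r))).countP A := by
  classical
  induction T generalizing S with
  | leaf l => simp [DTree.queries]
  | node i c ih =>
    let x r := Function.update b (p r) (v r)
    set S' := S.filter fun r => p r ≠ i
    set d := (S.filter fun r => p r = i).card
    have hd : d ≤ 1 := Finset.card_le_one.2 fun r hr r' hr' =>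
      hp ((Finset.mem_filter.1 hr).2.trans (Finset.mem_filter.1 hr').2.symm)
    have hdA : d ≤ if A i then 1 else 0 := by
      split_ifs with hAi
      · exact hd
      · exact (Finset.card_eq_zero.2 <| Finset.filter_eq_empty_iff.2
          fun r _ (hr : p r = i) => hAi (hr ▸ hA r)).le
    have hS : S.card = d + S'.card := (Finset.card_filter_add_card_filter_not _).symm
    have hmet : (S.filter fun r => p r ∈ (DTree.node i c).queries (x r)).card ≤
        d + (S'.filter fun r => p r ∈ (c (b i)).queries (x r)).card := by
      refine (Finset.card_le_card fun r hr => ?_).trans (Finset.card_union_le _ _)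
      by_cases hri : p r = i
      · simp_all
      · simp_all [S', x, DTree.queries_node_update hri]
    have hcount : d * S.card + ∑ r ∈ S', ((c (b i)).queries (x r)).countP A ≤
        ∑ r ∈ S, ((DTree.node i c).queries (x r)).countP A := by
      simp only [DTree.queries, List.countP_cons, decide_eq_true_eq, Finset.sum_add_distrib,
        Finset.sum_const, smul_eq_mul]
      rw [add_comm, mul_comm d]
      refine Nat.add_le_add ?_ (Nat.mul_le_mul_left _ hdA)
      refine (Finset.sum_congr rfl fun r hr => ?_).trans_le
        (Finset.sum_le_sum_of_subset (Finset.filter_subset _ S))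
      simp only [x, Function.update_of_ne (Finset.mem_filter.1 hr).2.symm]
    have hle := Finset.card_filter_le S' fun r => p r ∈ (c (b i)).queries (x r)
    have key := ih (b i) S'
    refine (Nat.mul_le_mul_right _ hmet).trans (le_trans ?_ (Nat.mul_le_mul_left 2 hcount))
    rw [hS]
    interval_cases d <;> nlinarith

theorem third_le_toOuterMeasure_inter {X : Type} {μ : PMF X} {A B : Set X}
    (hA : 2 / 3 ≤ μ.toOuterMeasure A) (hB : 2 / 3 ≤ μ.toOuterMeasure B) :
    1 / 3 ≤ μ.toOuterMeasure (A ∩ B) := by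
  have hsum : μ.toOuterMeasure A + μ.toOuterMeasure B ≤ 1 + μ.toOuterMeasure (A ∩ B) := by
    simp only [PMF.toOuterMeasure_apply, ← ENNReal.tsum_add, ← μ.tsum_coe]
    refine ENNReal.tsum_le_tsum fun T => ?_
    by_cases hTA : T ∈ A <;> by_cases hTB : T ∈ B <;> simp [hTA, hTB]
  refine (ENNReal.add_le_add_iff_left ENNReal.one_ne_top).1 (le_trans ?_ hsum)
  refine le_trans (le_of_eq ?_) (add_le_add hA hB)
  rw [ENNReal.div_add_div_same, ← ENNReal.toReal_eq_toReal_iff' (by finiteness) (by finiteness),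
    ENNReal.toReal_add (by finiteness) (by finiteness)]
  norm_num

theorem mul_card_le_of_le_toOuterMeasure {X P : Type} [Fintype P] {μ : PMF X} {E : P → Set X}
    [∀ T, DecidablePred fun p => T ∈ E p] {c : ℝ≥0∞} {b : ℕ}
    (hc : ∀ p, c ≤ μ.toOuterMeasure (E p))
    (hb : ∀ T ∈ μ.support, (Finset.univ.filter fun p => T ∈ E p).card ≤ b) :
    c * Fintype.card P ≤ b := by
  calc c * Fintype.card P = ∑ _p : P, c := by simp [mul_comm]
    _ ≤ ∑ p, ∑' T, (E p).indicator μ T := by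
        gcongr with p
        simpa only [PMF.toOuterMeasure_apply] using hc p
    _ = ∑' T, μ T * (Finset.univ.filter fun p => T ∈ E p).card := by
        rw [← Summable.tsum_finsetSum fun _ _ => ENNReal.summable]
        simp [Set.indicator_apply, ← Finset.sum_filter, mul_comm]
    _ ≤ ∑' T, μ T * b := by
        refine ENNReal.tsum_le_tsum fun T => ?_
        by_cases hT : T ∈ μ.support
        · gcongr
          exact hb T hT
        · simp [(PMF.apply_eq_zero_iff μ T).2 hT]
    _ = b := by rw [ENNReal.tsum_mul_right, μ.tsum_coe, one_mul]

theorem exists_pmf_depth_le_Rq [Finite ι] (f : PartialFn ι α) :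
    ∃ μ : PMF (DTree ι α (Option Bool)), (∀ T ∈ μ.support, T.depth ≤ Rq f) ∧
      ∀ x b, f x = some b → 2 / 3 ≤ μ.toOuterMeasure {T | T.eval x = some b} := by
  have := Fintype.ofFinite ι
  obtain ⟨T, hT, hTf⟩ := TreeComputable.of_fintype f
  refine Nat.sInf_mem (s := {d | ∃ μ : PMF (DTree ι α (Option Bool)),
    (∀ T ∈ μ.support, T.depth ≤ d) ∧
      ∀ x b, f x = some b → 2 / 3 ≤ μ.toOuterMeasure {T | T.eval x = some b}})
    ⟨Fintype.card ι, PMF.pure T, by simpa using hT, fun x b hx => ?_⟩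
  rw [PMF.toOuterMeasure_pure_apply, if_pos (by simp [hTf, hx])]
  exact ENNReal.div_le_of_le_mul (by norm_num)

theorem Rq_le_of_pmf {f : PartialFn ι α} {d : ℕ} (μ : PMF (DTree ι α (Option Bool)))
    (hd : ∀ T ∈ μ.support, T.depth ≤ d)
    (hf : ∀ x b, f x = some b → 2 / 3 ≤ μ.toOuterMeasure {T | T.eval x = some b}) : Rq f ≤ d :=
  Nat.sInf_le ⟨μ, hd, hf⟩

theorem card_le_of_eval_ne_le [Finite ι] {P : Type} [Fintype P] {f : PartialFn ι α}
    {x y : P → Input ι α} (hx : ∀ p, f (x p) = some false) (hy : ∀ p, f (y p) = some true) {b : ℕ}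
    (hb : ∀ T : DTree ι α (Option Bool), T.depth ≤ Rq f →
      (Finset.univ.filter fun p => T.eval (x p) ≠ T.eval (y p)).card ≤ b) :
    Fintype.card P ≤ 3 * b := by
  classical
  obtain ⟨μ, hμ, hf⟩ := exists_pmf_depth_le_Rq f
  have key := mul_card_le_of_le_toOuterMeasure (b := b)
    (E := fun p => {T | T.eval (x p) = some false} ∩ {T | T.eval (y p) = some true})
    (fun p => third_le_toOuterMeasure_inter (hf _ _ (hx p)) (hf _ _ (hy p)))
    fun T hT => le_trans (Finset.card_le_card fun p hp => ?_) (hb T (hμ T hT))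
  · rw [one_div, ENNReal.inv_mul_le_iff (by norm_num) (by norm_num)] at key
    exact_mod_cast key
  · simp only [Finset.mem_filter, Finset.mem_univ, true_and, Set.mem_inter_iff,
      Set.mem_ofPred_eq] at hp ⊢
    simp [hp]

/-- The tree that simulates `T` on the extension by zero of an input along `e`. -/
noncomputable def DTree.restrict {q : ℕ} [NeZero q] (e : κ → ι) :
    DTree ι (fun _ => q) L → DTree κ (fun _ => q) L
  | .leaf l => .leaf l
  | .node i c =>
    open Classical in
    if h : ∃ s, e s = i then .node h.choose fun a => (c a).restrict e else (c 0).restrict e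

theorem DTree.depth_restrict_le {q : ℕ} [NeZero q] (e : κ → ι) (T : DTree ι (fun _ => q) L) :
    (T.restrict e).depth ≤ T.depth := by
  induction T with
  | leaf l => exact le_rfl
  | node i c ih =>
    rw [DTree.restrict]
    split_ifs
    · exact Nat.succ_le_succ (Finset.sup_mono_fun fun a _ => ih a)
    · exact (ih 0).trans (DTree.depth_child_lt (α := fun _ => q) i c 0).le

theorem DTree.eval_restrict {q : ℕ} [NeZero q] (e : κ → ι) (T : DTree ι (fun _ => q) L)
    (z : Input κ fun _ => q) : (T.restrict e).eval z = T.eval (Function.extend e z 0) := by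
  induction T with
  | leaf l => rfl
  | node i c ih =>
    classical
    rw [DTree.restrict, DTree.eval, Function.extend_def]
    split_ifs
    · exact ih _
    · exact ih _

/-- The function of an input on `ι` that applies `f` to the variables selected by `e`. -/
def PartialFn.comap {q : ℕ} (f : PartialFn κ fun _ => q) (e : κ → ι) : PartialFn ι fun _ => q :=
  fun x => f fun s => x (e s)

theorem Rq_le_Rq_comap [Finite ι] {q : ℕ} [NeZero q] {e : κ → ι} (he : Function.Injective e)
    (f : PartialFn κ fun _ => q) : Rq f ≤ Rq (f.comap e) := by
  obtain ⟨μ, hμ, hf⟩ := exists_pmf_depth_le_Rq (f.comap e)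
  refine Rq_le_of_pmf (μ.map (DTree.restrict e)) (fun T hT => ?_) fun z b hz => ?_
  · obtain ⟨T', hT', rfl⟩ := (PMF.mem_support_map_iff _ _ _).1 hT
    exact (T'.depth_restrict_le e).trans (hμ T' hT')
  · rw [PMF.toOuterMeasure_map_apply]
    simpa only [Set.preimage_ofPred_eq, DTree.eval_restrict] using
      hf (Function.extend e z 0) b (by simpa only [PartialFn.comap, he.extend_apply] using hz)

end Randomized

/-! ### Building exact quantum query algorithms -/

section BasisMap

theorem sum_norm_sq_mulVec {S τ : Type} [Fintype S] [Fintype τ] [DecidableEq τ] {V : Matrix S τ ℂ}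
    (hV : V.conjTranspose * V = 1) (v : τ → ℂ) : ∑ s, ‖V.mulVec v s‖ ^ 2 = ∑ w, ‖v w‖ ^ 2 := by
  have hnorm : ∀ {A : Type} [Fintype A] (u : A → ℂ),
      ((∑ s, ‖u s‖ ^ 2 : ℝ) : ℂ) = dotProduct (star u) u := fun u => by
    simp [dotProduct, RCLike.star_def, Complex.conj_mul']
  have h : dotProduct (star (V.mulVec v)) (V.mulVec v) = dotProduct (star v) v := by
    rw [Matrix.star_mulVec, Matrix.dotProduct_mulVec, Matrix.vecMul_vecMul, hV, Matrix.vecMul_one]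
  exact_mod_cast (hnorm _).trans (h.trans (hnorm v).symm)

variable {S S' τ : Type} [DecidableEq S] [DecidableEq S']

/-- The linear map that sends the basis vector at `w` to the basis vector at `f w`. -/
noncomputable def basisMap (f : τ → S) : Matrix S τ ℂ := (1 : Matrix S S ℂ).submatrix id f

theorem basisMap_comp [Fintype S] (g : S → S') (f : τ → S) :
    basisMap (g ∘ f) = basisMap g * basisMap f := by
  ext s w
  simp [basisMap, Matrix.mul_apply, Matrix.one_apply]

theorem conjTranspose_basisMap_mul_self [Fintype S] [DecidableEq τ] {f : τ → S}
    (hf : Function.Injective f) : (basisMap f).conjTranspose * basisMap f = 1 := by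
  rw [basisMap, Matrix.conjTranspose_submatrix, Matrix.conjTranspose_one,
    ← Matrix.submatrix_mul _ _ _ _ _ Function.bijective_id, Matrix.one_mul,
    Matrix.submatrix_one f hf]

theorem star_basisMap_perm (σ : Equiv.Perm S) :
    star (basisMap σ) = basisMap σ.symm := by
  ext s s'
  simp [basisMap, Matrix.star_apply, Matrix.one_apply, Equiv.eq_symm_apply, eq_comm]

theorem basisMap_perm_mem_unitaryGroup [Fintype S] (σ : Equiv.Perm S) :
    basisMap σ ∈ Matrix.unitaryGroup S ℂ :=
  Matrix.mem_unitaryGroup_iff'.2 (conjTranspose_basisMap_mul_self σ.injective)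

theorem basisMap_perm_mulVec [Fintype S] (σ : Equiv.Perm S) (u : S → ℂ) :
    (basisMap σ).mulVec u = u ∘ σ.symm := by
  ext s
  simp [basisMap, Matrix.mulVec, dotProduct, Matrix.one_apply, ← Equiv.symm_apply_eq]

theorem diagonal_mul_basisMap [Fintype S] [Fintype τ] [DecidableEq τ] (χ : S → ℂ) (f : τ → S) :
    Matrix.diagonal χ * basisMap f = basisMap f * Matrix.diagonal (χ ∘ f) := by
  ext s w
  by_cases h : s = f w <;> simp [basisMap, Matrix.one_apply, h]

theorem exists_of_basisMap_mulVec_ne_zero [Fintype τ] {f : τ → S} {u : τ → ℂ} {s : S}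
    (h : (basisMap f).mulVec u s ≠ 0) : ∃ w, f w = s ∧ u w ≠ 0 := by
  obtain ⟨w, -, hw⟩ := Finset.exists_ne_zero_of_sum_ne_zero h
  refine ⟨w, ?_, right_ne_zero_of_mul hw⟩
  by_contra hne
  exact hw (by simp [basisMap, Ne.symm hne])

/-- `A` acts on the range of `E` as it does on its domain, and the identity acts on the orthogonal
complement. -/
theorem exists_unitary_mul_eq_mul [Fintype S] [Fintype τ] [DecidableEq τ] {E : Matrix S τ ℂ}
    (hE : E.conjTranspose * E = 1) {A : Matrix τ τ ℂ} (hA : A ∈ Matrix.unitaryGroup τ ℂ) :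
    ∃ B ∈ Matrix.unitaryGroup S ℂ, B * E = E * A := by
  have hE' : ∀ M : Matrix τ S ℂ, E.conjTranspose * (E * M) = M := fun M => by
    rw [← Matrix.mul_assoc, hE, Matrix.one_mul]
  have hA' : ∀ M : Matrix τ S ℂ, A * (A.conjTranspose * M) = M := fun M => by
    rw [← Matrix.mul_assoc, ← Matrix.star_eq_conjTranspose, Matrix.mem_unitaryGroup_iff.1 hA,
      Matrix.one_mul]
  refine ⟨E * A * E.conjTranspose + (1 - E * E.conjTranspose), ?_, ?_⟩
  · rw [Matrix.mem_unitaryGroup_iff, Matrix.star_eq_conjTranspose]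
    simp only [Matrix.conjTranspose_add, Matrix.conjTranspose_sub, Matrix.conjTranspose_mul,
      Matrix.conjTranspose_conjTranspose, Matrix.conjTranspose_one, Matrix.add_mul, Matrix.mul_add,
      Matrix.sub_mul, Matrix.mul_sub, Matrix.mul_assoc, Matrix.one_mul, Matrix.mul_one, hE', hA']
    abel
  · simp only [Matrix.add_mul, Matrix.sub_mul, Matrix.mul_assoc, hE, Matrix.mul_one, Matrix.one_mul,
      sub_self, add_zero]

theorem matrix_pow_mul_eq_mul_pow [Fintype S] [Fintype τ] [DecidableEq τ] {M : Matrix S S ℂ}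
    {E : Matrix S τ ℂ} {N : Matrix τ τ ℂ} (h : M * E = E * N) (t : ℕ) : M ^ t * E = E * N ^ t := by
  induction t with
  | zero => simp
  | succ t ih =>
    rw [pow_succ, pow_succ, Matrix.mul_assoc, h, ← Matrix.mul_assoc, ih, Matrix.mul_assoc]

end BasisMap

section QueryUnitary

variable {ι R : Type} {q : ℕ} [NeZero q]

/-- The action of the query oracle for `x` on the basis states. -/
def queryPerm (R : Type) (x : Input ι fun _ => q) : Equiv.Perm ((Σ _ : ι, Fin q) × R) where
  toFun s := (⟨s.1.1, s.1.2 + x s.1.1⟩, s.2)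
  invFun s := (⟨s.1.1, s.1.2 - x s.1.1⟩, s.2)
  left_inv s := by simp
  right_inv s := by simp

theorem oracleMatrix_eq_basisMap [DecidableEq ι] (W : ℕ) (x : Input ι fun _ => q) :
    oracleMatrix W x = basisMap (queryPerm (Fin W) x) := by
  ext s s'
  simp [oracleMatrix, basisMap, queryPerm, Matrix.one_apply, Prod.ext_iff, and_comm]

variable [Fintype ι] [DecidableEq ι] [Fintype R] [DecidableEq R]

/-- The operator `U x` is a product of fixed unitaries and `k` query operators for `x`. -/
inductive QueryUnitary (R : Type) [Fintype R] [DecidableEq R] : ℕ →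
    (Input ι (fun _ => q) → Matrix ((Σ _ : ι, Fin q) × R) ((Σ _ : ι, Fin q) × R) ℂ) → Prop
  | const {U : Matrix ((Σ _ : ι, Fin q) × R) ((Σ _ : ι, Fin q) × R) ℂ}
      (hU : U ∈ Matrix.unitaryGroup ((Σ _ : ι, Fin q) × R) ℂ) : QueryUnitary R 0 fun _ => U
  | query : QueryUnitary R 1 fun x => basisMap (queryPerm R x)
  | mul {k l : ℕ}
      {U V : Input ι (fun _ => q) → Matrix ((Σ _ : ι, Fin q) × R) ((Σ _ : ι, Fin q) × R) ℂ}
      (hU : QueryUnitary R k U) (hV : QueryUnitary R l V) :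
      QueryUnitary R (k + l) fun x => U x * V x

namespace QueryUnitary

variable {U : Input ι (fun _ => q) → Matrix ((Σ _ : ι, Fin q) × R) ((Σ _ : ι, Fin q) × R) ℂ}
  {k : ℕ}

theorem mem_unitaryGroup (h : QueryUnitary R k U) (x : Input ι fun _ => q) :
    U x ∈ Matrix.unitaryGroup ((Σ _ : ι, Fin q) × R) ℂ := by
  induction h with
  | const hU => exact hU
  | query => exact basisMap_perm_mem_unitaryGroup _
  | mul _ _ ihU ihV => exact mul_mem ihU ihV

theorem pow (h : QueryUnitary R k U) (t : ℕ) : QueryUnitary R (t * k) fun x => U x ^ t := by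
  induction t with
  | zero => simpa only [Nat.zero_mul, pow_zero] using const (one_mem _)
  | succ t ih => simpa only [Nat.succ_mul, pow_succ] using ih.mul h

/-- Negating the answer register before and after a query turns it into the inverse query. -/
protected theorem star (h : QueryUnitary R k U) : QueryUnitary R k fun x => star (U x) := by
  induction h with
  | const hU => exact const (Unitary.star_mem hU)
  | query =>
    let neg : Equiv.Perm ((Σ _ : ι, Fin q) × R) :=
      (Equiv.sigmaCongrRight fun _ => Equiv.neg (Fin q)).prodCongr (Equiv.refl R)
    have hneg : QueryUnitary (ι := ι) (q := q) R 0 fun _ => basisMap neg :=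
      const (basisMap_perm_mem_unitaryGroup neg)
    convert (hneg.mul query).mul hneg using 2 with x
    rw [star_basisMap_perm, ← basisMap_comp, ← basisMap_comp]
    congr 1
    ext1 s
    have hsub (a b : Fin q) : a - b = -(-a + b) := by rw [neg_add, neg_neg, sub_eq_add_neg]
    exact Prod.ext (Sigma.ext rfl (heq_of_eq (hsub _ _))) rfl
  | @mul k l _ _ _ _ ihU ihV =>
    rw [add_comm]
    simpa only [star_mul] using ihV.mul ihU

end QueryUnitary

theorem qProd_congr {τ : Type} [Fintype τ] {U V : ℕ → Matrix τ τ ℂ} {O : Matrix τ τ ℂ} {k : ℕ}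
    (h : ∀ t ≤ k, U t = V t) : qProd U O k = qProd V O k := by
  induction k with
  | zero => exact h 0 le_rfl
  | succ k ih => rw [qProd, qProd, h _ le_rfl, ih fun t ht => h t (Nat.le_succ_of_le ht)]

theorem exists_qProd_eq_mul {τ : Type} [Fintype τ] [DecidableEq τ] {U V : ℕ → Matrix τ τ ℂ}
    (hU : ∀ t, U t ∈ Matrix.unitaryGroup τ ℂ) (hV : ∀ t, V t ∈ Matrix.unitaryGroup τ ℂ)
    (k l : ℕ) : ∃ W : ℕ → Matrix τ τ ℂ, (∀ t, W t ∈ Matrix.unitaryGroup τ ℂ) ∧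
      ∀ O, qProd W O (k + l) = qProd U O k * qProd V O l := by
  let W t := if t < l then V t else if t = l then U 0 * V l else U (t - l)
  have hWl : ∀ O, qProd W O l = U 0 * qProd V O l := fun O => by
    cases l with
    | zero => simp [qProd, W]
    | succ l =>
      rw [qProd, qProd, qProd_congr (V := V) fun t ht => if_pos (Nat.lt_succ_of_le ht)]
      simp [W, Matrix.mul_assoc]
  refine ⟨W, fun t => ?_, fun O => ?_⟩
  · simp only [W]
    split_ifs
    exacts [hV t, mul_mem (hU 0) (hV l), hU _]
  · induction k with
    | zero => rw [zero_add, hWl, qProd]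
    | succ k ih =>
      have hW : W (k + l + 1) = U (k + 1) := by
        simp only [W]
        rw [if_neg (by omega), if_neg (by omega)]
        congr 1
        omega
      rw [Nat.add_right_comm, qProd, hW, ih, qProd, Matrix.mul_assoc, Matrix.mul_assoc,
        Matrix.mul_assoc]

theorem QueryUnitary.exists_qProd_eq {k : ℕ}
    {U : Input ι (fun _ => q) → Matrix ((Σ _ : ι, Fin q) × R) ((Σ _ : ι, Fin q) × R) ℂ}
    (h : QueryUnitary R k U) :
    ∃ V : ℕ → Matrix ((Σ _ : ι, Fin q) × R) ((Σ _ : ι, Fin q) × R) ℂ,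
      (∀ t, V t ∈ Matrix.unitaryGroup ((Σ _ : ι, Fin q) × R) ℂ) ∧
      ∀ x, qProd V (basisMap (queryPerm R x)) k = U x := by
  induction h with
  | @const U hU => exact ⟨fun _ => U, fun _ => hU, fun _ => rfl⟩
  | query => exact ⟨fun _ => 1, fun _ => one_mem _, fun x => by simp [qProd]⟩
  | @mul k l _ _ _ _ ihU ihV =>
    obtain ⟨U', hU', hU⟩ := ihU
    obtain ⟨V', hV', hV⟩ := ihV
    obtain ⟨W, hW, hWO⟩ := exists_qProd_eq_mul hU' hV' k l
    exact ⟨W, hW, fun x => by rw [hWO, hU, hV]⟩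

end QueryUnitary

section Exact

variable {ι : Type} [Fintype ι] [DecidableEq ι]

/-- The algorithm outputs `f x` with certainty on every input `x` in the domain of `f`. -/
def QAlg.IsExact {α : ι → ℕ} (A : QAlg ι α) (f : PartialFn ι α) : Prop :=
  ∀ x b, f x = some b → A.outProb x (some b) = 1

variable {q : ℕ} [NeZero q]

theorem QueryUnitary.exists_isExact {k n : ℕ}
    {U : Input ι (fun _ => q) → Matrix (QIdx ι (fun _ => q) n) (QIdx ι (fun _ => q) n) ℂ}
    (hU : QueryUnitary (Fin n) k U) {v : QIdx ι (fun _ => q) n → ℂ} (hv : ∑ s, ‖v s‖ ^ 2 = 1)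
    {f : PartialFn ι fun _ => q} (out : QIdx ι (fun _ => q) n → Option Bool)
    (hout : ∀ x b, f x = some b → ∀ s, (U x).mulVec v s ≠ 0 → out s = some b) :
    ∃ A : QAlg ι fun _ => q, A.T = k ∧ A.IsExact f := by
  obtain ⟨V, hV, hVU⟩ := hU.exists_qProd_eq
  refine ⟨⟨k, n, V, hV, v, hv, out⟩, rfl, fun x b hb => ?_⟩
  rw [← hv, ← sum_norm_sq_mulVec (Matrix.mem_unitaryGroup_iff'.1 (hU.mem_unitaryGroup x)) v]
  refine Finset.sum_congr rfl fun s _ => ?_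
  rw [QAlg.finalState, oracleMatrix_eq_basisMap, hVU]
  by_cases hs : (U x).mulVec v s = 0
  · simp [hs]
  · rw [if_pos (hout x b hb s hs)]

end Exact

section Simulation

variable {ι : Type} {q : ℕ} {L R τ : Type}

/-- The rest of a tree after the first query was answered by `a`. -/
def DTree.child : DTree ι (fun _ => q) L → Fin q → DTree ι (fun _ => q) L
  | .leaf l, _ => .leaf l
  | .node _ c, a => c a

theorem DTree.depth_child_le {t : ℕ} {T : DTree ι (fun _ => q) L} (hT : T.depth ≤ t + 1)
    (a : Fin q) : (T.child a).depth ≤ t := by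
  cases T with
  | leaf l => exact Nat.zero_le t
  | node i c => exact Nat.le_of_lt_succ ((DTree.depth_child_lt (α := fun _ => q) i c a).trans_le hT)

variable [Inhabited ι]

/-- The first query of a tree; a leaf is given a dummy query. -/
def DTree.root : DTree ι (fun _ => q) L → ι
  | .leaf _ => default
  | .node i _ => i

theorem DTree.eval_child_root (T : DTree ι (fun _ => q) L) (x : Input ι fun _ => q) :
    (T.child (x T.root)).eval x = T.eval x := by
  cases T <;> rfl

variable [Fintype ι] [DecidableEq ι] [NeZero q] {W : Type} [Fintype W] [DecidableEq W]

/-- The query register is swapped with a position computed from the workspace and the register for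
the answer, and swapped back after the query. -/
theorem exists_queryUnitary_query (e : W ≃ R × Fin q) (pos : R → ι) :
    ∃ σ : Input ι (fun _ => q) → Equiv.Perm ((Σ _ : ι, Fin q) × W),
      QueryUnitary W 1 (fun x => basisMap (σ x)) ∧
      ∀ x r, σ x (⟨default, 0⟩, e.symm (r, 0)) = (⟨default, 0⟩, e.symm (r, x (pos r))) := by
  have hinv : Function.Involutive fun s : (Σ _ : ι, Fin q) × W =>
      ((⟨Equiv.swap default (pos (e s.2).1) s.1.1, (e s.2).2⟩, e.symm ((e s.2).1, s.1.2)) :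
        (Σ _ : ι, Fin q) × W) := fun s => by simp
  let π := hinv.toPerm
  have hπ : QueryUnitary (ι := ι) (q := q) W 0 fun _ => basisMap π :=
    .const (basisMap_perm_mem_unitaryGroup π)
  have hπr : ∀ r a b, π (⟨default, a⟩, e.symm (r, b)) = (⟨pos r, b⟩, e.symm (r, a)) :=
    fun r a b => by simp [π]
  have hπr' : ∀ r a b, π (⟨pos r, b⟩, e.symm (r, a)) = (⟨default, a⟩, e.symm (r, b)) :=
    fun r a b => by rw [← hπr, hinv.toPerm_involutive]
  refine ⟨fun x => π * (queryPerm W x * π), ?_, fun x r => ?_⟩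
  · simpa only [Equiv.Perm.coe_mul, basisMap_comp] using hπ.mul (QueryUnitary.query.mul hπ)
  · rw [Equiv.Perm.mul_apply, Equiv.Perm.mul_apply, hπr]
    simpa [queryPerm] using hπr' r 0 (x (pos r))

/-- The bijection `((a, b), c) ↦ ((a, c), b)`, used to reorder the registers of a workspace. -/
def prodRightComm (A B C : Type) : (A × B) × C ≃ (A × C) × B where
  toFun p := ((p.1.1, p.2), p.1.2)
  invFun p := ((p.1.1, p.2), p.1.2)

theorem exists_queryUnitary_eval {t : ℕ} (e : W ≃ R × (Fin t → Fin q))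
    {T : R → DTree ι (fun _ => q) L} (hT : ∀ r, (T r).depth ≤ t) :
    ∃ (σ : Input ι (fun _ => q) → Equiv.Perm ((Σ _ : ι, Fin q) × W))
      (out : (Σ _ : ι, Fin q) × W → L), QueryUnitary W t (fun x => basisMap (σ x)) ∧
      ∀ x r, out (σ x (⟨default, 0⟩, e.symm (r, 0))) = (T r).eval x := by
  induction t generalizing R with
  | zero =>
    have hleaf : ∀ r, ∃ l, T r = .leaf l := fun r => by
      cases hr : T r with
      | leaf l => exact ⟨l, rfl⟩
      | node i c => simpa [hr, DTree.depth] using hT r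
    choose l hl using hleaf
    exact ⟨fun _ => 1, fun s => l (e s.2).1, .const (basisMap_perm_mem_unitaryGroup 1),
      fun x r => by simp [hl, DTree.eval]⟩
  | succ t ih =>
    let split : (Fin (t + 1) → Fin q) ≃ Fin q × (Fin t → Fin q) :=
      (Fin.consEquiv fun _ => Fin q).symm
    have hsplit : split.symm (0, 0) = 0 := (Equiv.symm_apply_eq split).2 rfl
    let e₁ : W ≃ (R × Fin q) × (Fin t → Fin q) :=
      (e.trans ((Equiv.refl R).prodCongr split)).trans (Equiv.prodAssoc _ _ _).symm
    let e₂ : W ≃ (R × (Fin t → Fin q)) × Fin q := e₁.trans (prodRightComm _ _ _)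
    obtain ⟨σ, hσ, hσx⟩ := exists_queryUnitary_query e₂ fun r => (T r.1).root
    obtain ⟨σ', out, hσ', hout⟩ := ih e₁ fun r => DTree.depth_child_le (hT r.1) r.2
    refine ⟨fun x => σ' x * σ x, out, ?_, fun x r => ?_⟩
    · simpa only [Equiv.Perm.coe_mul, basisMap_comp] using hσ'.mul hσ
    · have h₀ : e.symm (r, 0) = e₂.symm ((r, 0), 0) := by simp [e₂, e₁, prodRightComm, hsplit]
      have h₁ : e₂.symm ((r, 0), x (T r).root) = e₁.symm ((r, x (T r).root), 0) := rfl
      rw [Equiv.Perm.mul_apply, h₀, hσx, h₁, hout, DTree.eval_child_root]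

theorem exists_queryUnitary_phase {t : ℕ} (e : W ≃ R × (Fin t → Fin q))
    {g : R → Input ι (fun _ => q) → L} (hg : ∀ r, TreeComputable t (g r)) {φ : L → ℂ}
    (hφ : ∀ l, ‖φ l‖ = 1) :
    ∃ χ : Input ι (fun _ => q) → (Σ _ : ι, Fin q) × W → ℂ,
      QueryUnitary W (2 * t) (fun x => Matrix.diagonal (χ x)) ∧
      ∀ x r, χ x (⟨default, 0⟩, e.symm (r, 0)) = φ (g r x) := by
  choose T hT hTg using hg
  obtain ⟨σ, out, hσ, hout⟩ := exists_queryUnitary_eval e hT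
  have hφ' : Matrix.diagonal (φ ∘ out) ∈ Matrix.unitaryGroup ((Σ _ : ι, Fin q) × W) ℂ := by
    rw [Matrix.mem_unitaryGroup_iff, Matrix.star_eq_conjTranspose, Matrix.diagonal_conjTranspose,
      Matrix.diagonal_mul_diagonal, ← Matrix.diagonal_one]
    congr 1
    ext s
    simp [Complex.mul_conj', hφ]
  refine ⟨fun x => φ ∘ out ∘ σ x, ?_, fun x r => by simp [hout, hTg]⟩
  convert hσ.star.mul ((QueryUnitary.const hφ').mul hσ) using 2 with x
  · ring
  · rw [diagonal_mul_basisMap, ← Matrix.mul_assoc,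
      Matrix.mem_unitaryGroup_iff'.1 (basisMap_perm_mem_unitaryGroup _), Matrix.one_mul]
    rfl

variable [Fintype τ] [DecidableEq τ]

theorem exists_isExact_of_iterate {k₁ k₂ t : ℕ} {A : Matrix τ τ ℂ}
    (hA : A ∈ Matrix.unitaryGroup τ ℂ) {v : τ → ℂ} (hv : ∑ w, ‖v w‖ ^ 2 = 1)
    {mark : τ → Input ι (fun _ => q) → Bool} (hmark : ∀ w, TreeComputable k₁ (mark w))
    {g : τ → Input ι (fun _ => q) → Option Bool} (hg : ∀ w, TreeComputable k₂ (g w))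
    {f : PartialFn ι fun _ => q}
    (hf : ∀ x b, f x = some b → ∀ w, ((A * Matrix.diagonal fun w =>
      if mark w x then (-1 : ℂ) else 1) ^ t).mulVec v w ≠ 0 → g w x = some b) :
    ∃ B : QAlg ι fun _ => q, B.T = k₂ + t * (2 * k₁) ∧ B.IsExact f := by
  let e := (Fintype.equivFin ((τ × (Fin k₂ → Fin q)) × (Fin k₁ → Fin q))).symm
  obtain ⟨χ, hχ, hχx⟩ := exists_queryUnitary_phase e (g := fun r => mark r.1)
    (fun r => hmark r.1) (φ := fun b => if b then -1 else 1) (by rintro (_ | _) <;> simp)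
  choose T hT hTg using hg
  obtain ⟨σ, out, hσ, hout⟩ := exists_queryUnitary_eval (e.trans (prodRightComm _ _ _))
    (T := fun r => T r.1) fun r => hT r.1
  let base (w : τ) : QIdx ι (fun _ => q) _ := (⟨default, 0⟩, e.symm ((w, 0), 0))
  have hbase : Function.Injective base := fun w w' h => by simpa [base] using h
  obtain ⟨B, hB, hBA⟩ := exists_unitary_mul_eq_mul (conjTranspose_basisMap_mul_self hbase) hA
  have hiter : ∀ x, (B * Matrix.diagonal (χ x)) ^ t * basisMap base =
      basisMap base * (A * Matrix.diagonal fun w => if mark w x then (-1 : ℂ) else 1) ^ t := by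
    refine fun x => matrix_pow_mul_eq_mul_pow ?_ t
    rw [Matrix.mul_assoc, diagonal_mul_basisMap, ← Matrix.mul_assoc, hBA, Matrix.mul_assoc]
    congr 3
    exact funext fun w => hχx x (w, 0)
  have hU := hσ.mul (((QueryUnitary.const hB).mul hχ).pow t)
  rw [zero_add] at hU
  refine hU.exists_isExact (v := (basisMap base).mulVec v)
    ((sum_norm_sq_mulVec (conjTranspose_basisMap_mul_self hbase) v).trans hv) out
    fun x b hb s hs => ?_
  rw [Matrix.mulVec_mulVec, Matrix.mul_assoc, hiter, ← Matrix.mul_assoc, ← basisMap_comp,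
    ← Matrix.mulVec_mulVec] at hs
  obtain ⟨w, rfl, hw⟩ := exists_of_basisMap_mulVec_ne_zero hs
  rw [← hf x b hb w hw, ← hTg]
  exact hout x (w, 0)

theorem exists_isExact_of_treeComputable {k : ℕ} {f : PartialFn ι fun _ => q}
    (hf : TreeComputable k f) : ∃ B : QAlg ι fun _ => q, B.T = k ∧ B.IsExact f := by
  obtain ⟨B, hB, hBf⟩ := exists_isExact_of_iterate (τ := Unit) (t := 0) (k₁ := 0) (one_mem _)
    (v := 1) (by simp) (mark := fun _ _ => false) (fun _ => .const false) (fun _ => hf) (f := f)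
    fun x b hb _ _ => hb
  exact ⟨B, by simpa using hB, hBf⟩

end Simulation

section QEq

variable {ι : Type} [Fintype ι] [DecidableEq ι]

theorem QAlg.IsExact.QEq_le {α : ι → ℕ} {f : PartialFn ι α} {A : QAlg ι α} (hA : A.IsExact f) :
    QEq f ≤ A.T :=
  Nat.sInf_le ⟨A, le_rfl, hA⟩

variable [Inhabited ι] {q : ℕ} [NeZero q] {f : PartialFn ι fun _ => q} {k : ℕ}

theorem QEq_le_of_treeComputable (hf : TreeComputable k f) : QEq f ≤ k := by
  obtain ⟨A, rfl, hA⟩ := exists_isExact_of_treeComputable hf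
  exact hA.QEq_le

theorem le_QEq (h : ∀ A : QAlg ι fun _ => q, A.IsExact f → k ≤ A.T) : k ≤ QEq f := by
  obtain ⟨A, -, hA⟩ := exists_isExact_of_treeComputable (TreeComputable.of_fintype f)
  obtain ⟨A, hAT, hA⟩ := Nat.sInf_mem (s := {d | ∃ A : QAlg ι fun _ => q, A.T ≤ d ∧
    A.IsExact f}) ⟨A.T, A, le_rfl, hA⟩
  exact (h A hA).trans hAT

end QEq

/-! ### Exact Grover search -/

section Grover

variable {S : Type} [DecidableEq S] {s : S → ℝ} {J : S} {θ : ℝ}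

/-- The unit vector at angle `β` from the complement of `J` in the plane spanned by the basis vector
at `J` and the vector `s`, where `s` itself is at angle `θ`. -/
noncomputable def rotatedState (s : S → ℝ) (J : S) (θ β : ℝ) (w : S) : ℝ :=
  if w = J then Real.sin β else Real.cos β / Real.cos θ * s w

theorem rotatedState_self (hθ : Real.cos θ ≠ 0) (hJ : s J = Real.sin θ) :
    rotatedState s J θ θ = s := by
  ext w
  by_cases hw : w = J <;> simp [rotatedState, hw, hJ, hθ]

variable [Fintype S]

/-- The reflection about the line spanned by the unit vector `s`. -/
noncomputable def reflection (s : S → ℝ) : Matrix S S ℂ :=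
  (2 : ℂ) • Matrix.vecMulVec (fun w => (s w : ℂ)) (fun w => (s w : ℂ)) - 1

theorem reflection_mem_unitaryGroup (hs : ∑ w, s w ^ 2 = 1) :
    reflection s ∈ Matrix.unitaryGroup S ℂ := by
  have hnorm : dotProduct (fun w => (s w : ℂ)) (fun w => (s w : ℂ)) = 1 := by
    simp only [dotProduct, ← sq]
    exact_mod_cast hs
  have hstar : star (reflection s) = reflection s := by
    ext i j
    simp [reflection, Matrix.star_apply, Matrix.vecMulVec_apply, Matrix.one_apply, eq_comm,
      mul_comm, apply_ite (starRingEnd ℂ)]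
  rw [Matrix.mem_unitaryGroup_iff, hstar, reflection, sub_mul, mul_sub, Matrix.smul_mul,
    Matrix.mul_smul, Matrix.vecMulVec_mul_vecMulVec, hnorm]
  simp only [one_smul, mul_one, one_mul, smul_smul]
  module

theorem reflection_mulVec (s v : S → ℝ) :
    (reflection s).mulVec (fun w => (v w : ℂ)) =
      fun w => ((2 * (∑ u, s u * v u) * s w - v w : ℝ) : ℂ) := by
  rw [reflection, Matrix.sub_mulVec, Matrix.smul_mulVec, Matrix.vecMulVec_mulVec, Matrix.one_mulVec]
  ext w
  simp [dotProduct, mul_comm, mul_left_comm]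

theorem sum_mul_sign_mul_rotatedState (hs : ∑ w, s w ^ 2 = 1) (hθ : Real.cos θ ≠ 0)
    (hJ : s J = Real.sin θ) (β : ℝ) :
    ∑ w, s w * ((if w = J then -1 else 1) * rotatedState s J θ β w) = Real.cos (β + θ) := by
  have hterm : ∀ w, s w * ((if w = J then -1 else 1) * rotatedState s J θ β w) =
      Real.cos β / Real.cos θ * s w ^ 2 + if w = J then
        -(Real.sin θ * Real.sin β) - Real.cos β / Real.cos θ * Real.sin θ ^ 2 else 0 := fun w => by
    by_cases hw : w = J
    · simp only [rotatedState, hw, hJ, if_true]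
      ring
    · simp only [rotatedState, hw, if_false]
      ring
  rw [Finset.sum_congr rfl fun w _ => hterm w, Finset.sum_add_distrib, ← Finset.mul_sum, hs,
    Finset.sum_ite_eq' Finset.univ J, if_pos (Finset.mem_univ J), Real.cos_add, Real.sin_sq]
  field_simp
  ring

/-- A round of Grover search rotates the state by the angle `2 * θ`. -/
theorem reflection_mul_diagonal_mulVec_rotatedState (hs : ∑ w, s w ^ 2 = 1)
    (hθ : Real.cos θ ≠ 0) (hJ : s J = Real.sin θ) (β : ℝ) :
    (reflection s * Matrix.diagonal fun w => if w = J then (-1 : ℂ) else 1).mulVec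
        (fun w => (rotatedState s J θ β w : ℂ)) =
      fun w => (rotatedState s J θ (β + 2 * θ) w : ℂ) := by
  have hsign : (Matrix.diagonal fun w => if w = J then (-1 : ℂ) else 1).mulVec
      (fun w => (rotatedState s J θ β w : ℂ)) =
        fun w => (((if w = J then -1 else 1) * rotatedState s J θ β w : ℝ) : ℂ) := by
    ext w
    rw [Matrix.mulVec_diagonal]
    split_ifs <;> simp
  rw [← Matrix.mulVec_mulVec, hsign, reflection_mulVec,
    sum_mul_sign_mul_rotatedState hs hθ hJ]
  ext w
  rw [Complex.ofReal_inj]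
  by_cases hw : w = J
  · simp only [rotatedState, hw, hJ, if_true]
    rw [Real.cos_add, Real.sin_add, Real.sin_two_mul, Real.cos_two_mul]
    linear_combination (-2 * Real.sin β) * Real.cos_sq_add_sin_sq θ
  · simp only [rotatedState, hw, if_false]
    rw [Real.cos_add, Real.cos_add, Real.sin_two_mul, Real.cos_two_mul]
    field_simp
    ring

theorem reflection_mul_diagonal_pow_mulVec (hs : ∑ w, s w ^ 2 = 1) (hθ : Real.cos θ ≠ 0)
    (hJ : s J = Real.sin θ) (k : ℕ) :
    ((reflection s * Matrix.diagonal fun w => if w = J then (-1 : ℂ) else 1) ^ k).mulVec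
        (fun w => (s w : ℂ)) =
      fun w => (rotatedState s J θ ((2 * k + 1) * θ) w : ℂ) := by
  induction k with
  | zero => simp [rotatedState_self hθ hJ]
  | succ k ih =>
    rw [pow_succ', ← Matrix.mulVec_mulVec, ih,
      reflection_mul_diagonal_mulVec_rotatedState hs hθ hJ]
    push_cast
    ring_nf

/-- The unit vector whose coordinates at the elements of `X` are all equal to `sin θ`. -/
noncomputable def startState (X : Type) [Fintype X] (θ : ℝ) : Option X → ℝ
  | some _ => Real.sin θ
  | none => √(1 - Fintype.card X * Real.sin θ ^ 2)

theorem sum_startState_sq {X : Type} [Fintype X] (h : Fintype.card X * Real.sin θ ^ 2 ≤ 1) :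
    ∑ w, startState X θ w ^ 2 = 1 := by
  rw [Fintype.sum_option]
  simp only [startState]
  rw [Real.sq_sqrt (sub_nonneg.2 h), Finset.sum_const, Finset.card_univ, nsmul_eq_mul,
    sub_add_cancel]

theorem sin_mul_le_one (k : ℕ) : Real.sin (Real.pi / (2 * (2 * k + 1))) * k ≤ 1 := by
  calc Real.sin (Real.pi / (2 * (2 * k + 1))) * k
      ≤ Real.pi / (2 * (2 * k + 1)) * k := by
        gcongr
        exact Real.sin_le (by positivity)
    _ ≤ 1 := by
        rw [div_mul_eq_mul_div, div_le_one (by positivity)]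
        nlinarith [Real.pi_le_four, k.cast_nonneg (α := ℝ)]

/-- With `θ = π / (2 * (2 * k + 1))`, exactly `k` rotations by `2 * θ` move the angle `θ` to
`π / 2`; the coordinate at `none` compensates for `X` having fewer than `1 / sin θ ^ 2` elements. -/
theorem exists_exact_search (X : Type) [Fintype X] [DecidableEq X] {k : ℕ}
    (hX : Fintype.card X ≤ k ^ 2) :
    ∃ A ∈ Matrix.unitaryGroup (Option X) ℂ, ∃ v : Option X → ℂ, ∑ w, ‖v w‖ ^ 2 = 1 ∧
      ∀ J w, ((A * Matrix.diagonal fun w =>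
        if w = some J then (-1 : ℂ) else 1) ^ k).mulVec v w ≠ 0 → w = some J := by
  set θ : ℝ := Real.pi / (2 * (2 * k + 1)) with hθ
  have hθ_nonneg : 0 ≤ Real.sin θ := by
    refine Real.sin_nonneg_of_nonneg_of_le_pi (by positivity) (div_le_self Real.pi_pos.le ?_)
    linarith [(k.cast_nonneg : (0 : ℝ) ≤ k)]
  have hsin : Fintype.card X * Real.sin θ ^ 2 ≤ 1 := by
    calc Fintype.card X * Real.sin θ ^ 2 ≤ (k ^ 2 : ℝ) * Real.sin θ ^ 2 := by
          gcongr
          exact_mod_cast hX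
      _ = (Real.sin θ * k) ^ 2 := by ring
      _ ≤ 1 := pow_le_one₀ (by positivity) (sin_mul_le_one k)
  have hs := sum_startState_sq hsin
  refine ⟨_, reflection_mem_unitaryGroup hs, fun w => startState X θ w, ?_, fun J w hw => ?_⟩
  · simpa only [Complex.norm_real, Real.norm_eq_abs, sq_abs] using hs
  have hk : (1 : ℝ) ≤ k := by
    have : 0 < k ^ 2 := (Fintype.card_pos_iff.2 ⟨J⟩).trans_le hX
    exact_mod_cast Nat.pos_of_ne_zero fun h => by simp [h] at this
  have hcos : Real.cos θ ≠ 0 := by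
    refine (Real.cos_pos_of_mem_Ioo ⟨?_, ?_⟩).ne'
    · exact (neg_lt_zero.2 (by positivity)).trans_le (by positivity)
    · exact div_lt_div_of_pos_left Real.pi_pos two_pos (by linarith)
  have hangle : (2 * k + 1) * θ = Real.pi / 2 := by
    rw [hθ]
    field_simp
  by_contra hne
  rw [reflection_mul_diagonal_pow_mulVec hs hcos rfl, hangle] at hw
  simp [rotatedState, hne] at hw

end Grover

section Product

open scoped Kronecker

theorem kronecker_mulVec_mul {S S' : Type} [Fintype S] [Fintype S'] (A : Matrix S S ℂ)
    (B : Matrix S' S' ℂ) (u : S → ℂ) (v : S' → ℂ) :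
    (A ⊗ₖ B).mulVec (fun w => u w.1 * v w.2) = fun w => A.mulVec u w.1 * B.mulVec v w.2 := by
  ext w
  simp only [Matrix.mulVec, dotProduct, Matrix.kroneckerMap_apply, Fintype.sum_prod_type,
    Finset.sum_mul_sum]
  exact Finset.sum_congr rfl fun i _ => Finset.sum_congr rfl fun j _ => by ring

theorem kronecker_pow {S S' : Type} [Fintype S] [Fintype S'] [DecidableEq S] [DecidableEq S']
    (A : Matrix S S ℂ) (B : Matrix S' S' ℂ) (k : ℕ) : (A ⊗ₖ B) ^ k = (A ^ k) ⊗ₖ (B ^ k) := by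
  induction k with
  | zero => simp
  | succ k ih => rw [pow_succ, pow_succ, pow_succ, ih, Matrix.mul_kronecker_mul]

/-- The phase `-1` is applied when exactly one of the two elements is marked, so that the two
searches are run in parallel with a single iterated operator. -/
theorem exists_exact_search_pair (X : Type) [Fintype X] [DecidableEq X] {k : ℕ}
    (hX : Fintype.card X ≤ k ^ 2) :
    ∃ A ∈ Matrix.unitaryGroup (Option X × Option X) ℂ, ∃ v : Option X × Option X → ℂ,
      ∑ w, ‖v w‖ ^ 2 = 1 ∧ ∀ J J' w, ((A * Matrix.diagonal fun w : Option X × Option X =>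
        if xor (ofProp (w.1 = some J)) (ofProp (w.2 = some J')) then (-1 : ℂ) else 1) ^ k).mulVec
          v w ≠ 0 → w = (some J, some J') := by
  obtain ⟨A, hA, v, hv, hAv⟩ := exists_exact_search X hX
  refine ⟨_, Matrix.kronecker_mem_unitary hA hA, fun w => v w.1 * v w.2, ?_, fun J J' w hw => ?_⟩
  · simp only [norm_mul, mul_pow, Fintype.sum_prod_type, ← Finset.mul_sum, hv, mul_one]
  have hsign : (Matrix.diagonal fun w : Option X × Option X =>
      if xor (ofProp (w.1 = some J)) (ofProp (w.2 = some J')) then (-1 : ℂ) else 1) =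
        (Matrix.diagonal fun w => if w = some J then (-1 : ℂ) else 1) ⊗ₖ
          (Matrix.diagonal fun w => if w = some J' then (-1 : ℂ) else 1) := by
    rw [Matrix.diagonal_kronecker_diagonal]
    congr 1
    ext w
    by_cases h : w.1 = some J <;> by_cases h' : w.2 = some J' <;> simp [ofProp, h, h']
  rw [hsign, ← Matrix.mul_kronecker_mul, kronecker_pow, kronecker_mulVec_mul] at hw
  exact Prod.ext (hAv J _ (left_ne_zero_of_mul hw)) (hAv J' _ (right_ne_zero_of_mul hw))

end Product

/-! ### The polynomial method -/

section Degree

variable {I : Type} [DecidableEq I]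

/-- The functions of a set `S` that are polynomials of degree at most `T` in the indicators of the
conditions `j ∈ S`; a product of such indicators is the indicator of `A ⊆ S`. -/
def degSpan (I : Type) [DecidableEq I] (T : ℕ) : Submodule ℂ (Finset I → ℂ) :=
  Submodule.span ℂ {g | ∃ A : Finset I, A.card ≤ T ∧ g = fun S => if A ⊆ S then 1 else 0}

theorem const_mem_degSpan (T : ℕ) (c : ℂ) : (fun _ => c) ∈ degSpan I T := by
  have h : (fun _ : Finset I => (1 : ℂ)) ∈ degSpan I T :=
    Submodule.subset_span ⟨∅, Nat.zero_le T, by simp⟩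
  simpa [Pi.smul_def] using (degSpan I T).smul_mem c h

theorem ite_mem_degSpan_one (j : I) (c d : ℂ) :
    (fun S => if j ∈ S then c else d) ∈ degSpan I 1 := by
  have h : (fun S => if j ∈ S then (1 : ℂ) else 0) ∈ degSpan I 1 :=
    Submodule.subset_span ⟨{j}, (Finset.card_singleton j).le, by simp⟩
  convert add_mem ((degSpan I 1).smul_mem (c - d) h) (const_mem_degSpan 1 d) using 1
  ext S
  by_cases hj : j ∈ S <;> simp [hj]

theorem mul_mem_degSpan {T T' : ℕ} {g g' : Finset I → ℂ} (hg : g ∈ degSpan I T)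
    (hg' : g' ∈ degSpan I T') : g * g' ∈ degSpan I (T + T') := by
  suffices degSpan I T * degSpan I T' ≤ degSpan I (T + T') from this (Submodule.mul_mem_mul hg hg')
  rw [degSpan, degSpan, Submodule.span_mul_span, Submodule.span_le]
  rintro _ ⟨_, ⟨A, hA, rfl⟩, _, ⟨A', hA', rfl⟩, rfl⟩
  refine Submodule.subset_span ⟨A ∪ A', (Finset.card_union_le A A').trans (by omega), ?_⟩
  ext S
  by_cases h : A ⊆ S <;> simp [Finset.union_subset_iff, h]

/-- The alternating sum of the indicator of `A ⊆ S` is the product over `i` of `-1 + 0` for `i ∈ A`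
and of `-1 + 1` for `i ∉ A`. -/
theorem sum_neg_one_pow_card_mul_eq_zero [Fintype I] {T : ℕ} (hT : T < Fintype.card I)
    {g : Finset I → ℂ} (hg : g ∈ degSpan I T) : ∑ S, (-1) ^ S.card * g S = 0 := by
  let alt : (Finset I → ℂ) →ₗ[ℂ] ℂ :=
    ∑ S : Finset I, ((-1 : ℂ) ^ S.card) • LinearMap.proj (R := ℂ) (φ := fun _ => ℂ) S
  have halt : ∀ h, alt h = ∑ S, (-1) ^ S.card * h S := fun h => by simp [alt]
  suffices degSpan I T ≤ LinearMap.ker alt from (halt g).symm.trans (this hg)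
  refine Submodule.span_le.2 ?_
  rintro _ ⟨A, hA, rfl⟩
  obtain ⟨j, -, hj⟩ := Finset.exists_mem_notMem_of_card_lt_card (hA.trans_lt hT)
  have hterm : ∀ S : Finset I, (-1 : ℂ) ^ S.card * (if A ⊆ S then 1 else 0) =
      (∏ _i ∈ S, (-1)) * ∏ i ∈ Finset.univ \ S, if i ∉ A then 1 else 0 := fun S => by
    rw [Finset.prod_const, Finset.prod_ite_zero]
    congr 2
    · simp [Finset.subset_iff, not_imp_not]
    · simp
  rw [SetLike.mem_coe, LinearMap.mem_ker, halt, Finset.sum_congr rfl fun S _ => hterm S,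
    ← Finset.powerset_univ, ← Finset.prod_add]
  exact Finset.prod_eq_zero (Finset.mem_univ j) (by simp [hj])

end Degree

section PolynomialMethod

variable {ι I : Type} [Fintype ι] [DecidableEq ι]

theorem QAlg.IsExact.exists_finalState_ne_zero {α : ι → ℕ} {f : PartialFn ι α} {A : QAlg ι α}
    (hA : A.IsExact f) {x : Input ι α} {b : Bool} (hb : f x = some b) :
    ∃ s, A.out s = some b ∧ A.finalState x s ≠ 0 := by
  have h : A.outProb x (some b) ≠ 0 := by simp [hA x b hb]
  obtain ⟨s, -, hs⟩ := Finset.exists_ne_zero_of_sum_ne_zero h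
  exact ⟨s, by_contra fun hout => hs (if_neg hout), fun hzero => hs (by simp [hzero])⟩

variable {q : ℕ} [NeZero q]

section

variable [DecidableEq I] {n : ℕ} {X : Finset I → Input ι fun _ => q}

theorem oracleMatrix_mulVec_mem_degSpan
    (hX : ∀ i a, (fun S => if X S i = a then (1 : ℂ) else 0) ∈ degSpan I 1) {k : ℕ}
    {u : Finset I → QIdx ι (fun _ => q) n → ℂ} (hu : ∀ s, (fun S => u S s) ∈ degSpan I k)
    (s : QIdx ι (fun _ => q) n) :
    (fun S => (oracleMatrix n (X S)).mulVec (u S) s) ∈ degSpan I (k + 1) := by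
  obtain ⟨⟨i, c⟩, r⟩ := s
  rw [add_comm]
  convert sum_mem fun a (_ : a ∈ (Finset.univ : Finset (Fin q))) =>
    mul_mem_degSpan (hX i a) (hu (⟨i, c - a⟩, r)) using 1
  ext S
  rw [oracleMatrix_eq_basisMap, basisMap_perm_mulVec]
  simp [queryPerm]

theorem mulVec_qProd_mem_degSpan
    (hX : ∀ i a, (fun S => if X S i = a then (1 : ℂ) else 0) ∈ degSpan I 1)
    (U : ℕ → Matrix (QIdx ι (fun _ => q) n) (QIdx ι (fun _ => q) n) ℂ)
    (v : QIdx ι (fun _ => q) n → ℂ) (k : ℕ) (s : QIdx ι (fun _ => q) n) :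
    (fun S => (qProd U (oracleMatrix n (X S)) k).mulVec v s) ∈ degSpan I k := by
  induction k generalizing s with
  | zero => exact const_mem_degSpan (I := I) 0 ((U 0).mulVec v s)
  | succ k ih =>
    convert sum_mem fun s' (_ : s' ∈ (Finset.univ : Finset (QIdx ι (fun _ => q) n))) =>
      (degSpan I (k + 1)).smul_mem (U (k + 1) s s') (oracleMatrix_mulVec_mem_degSpan hX ih s')
      using 1
    ext S
    rw [qProd, ← Matrix.mulVec_mulVec, ← Matrix.mulVec_mulVec]
    simp only [Finset.sum_apply, Pi.smul_apply, smul_eq_mul]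
    rfl

end

namespace QAlg

variable {f : PartialFn ι fun _ => q} {A : QAlg ι fun _ => q}

theorem sum_norm_sq_finalState (A : QAlg ι fun _ => q) (x : Input ι fun _ => q) :
    ∑ s, ‖A.finalState x s‖ ^ 2 = 1 := by
  have hU : ∀ k, qProd A.U (oracleMatrix A.W x) k ∈
      Matrix.unitaryGroup (QIdx ι (fun _ => q) A.W) ℂ := fun k => by
    induction k with
    | zero => exact A.unitary 0
    | succ k ih =>
      rw [qProd, oracleMatrix_eq_basisMap] at *
      exact mul_mem (mul_mem (A.unitary _) (basisMap_perm_mem_unitaryGroup _)) ih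
  rw [← A.init_norm, ← sum_norm_sq_mulVec (Matrix.mem_unitaryGroup_iff'.1 (hU A.T)) A.init]
  rfl

theorem IsExact.finalState_eq_zero (hA : A.IsExact f) {x : Input ι fun _ => q} {b : Bool}
    (hb : f x = some b) {s : QIdx ι (fun _ => q) A.W} (hs : A.out s ≠ some b) :
    A.finalState x s = 0 := by
  have hsum : ∑ s, (if A.out s = some b then 0 else ‖A.finalState x s‖ ^ 2) = 0 := by
    have hsplit : ∀ s, (if A.out s = some b then 0 else ‖A.finalState x s‖ ^ 2) =
        ‖A.finalState x s‖ ^ 2 - if A.out s = some b then ‖A.finalState x s‖ ^ 2 else 0 :=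
      fun s => by split_ifs <;> simp
    rw [Finset.sum_congr rfl fun s _ => hsplit s, Finset.sum_sub_distrib,
      A.sum_norm_sq_finalState, ← outProb, hA x b hb, sub_self]
  have hterm := (Finset.sum_eq_zero_iff_of_nonneg fun s _ => by positivity).1 hsum s
    (Finset.mem_univ s)
  simpa [hs] using hterm

/-- On the inputs `X S` the function is the conjunction of `card I` variables, whose only
representation as a polynomial has full degree. -/
theorem IsExact.card_le [DecidableEq I] [Fintype I] (hA : A.IsExact f)
    {X : Finset I → Input ι fun _ => q}
    (hX : ∀ i a, (fun S => if X S i = a then (1 : ℂ) else 0) ∈ degSpan I 1)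
    (hf : ∀ S, f (X S) = some (ofProp (S = Finset.univ))) : Fintype.card I ≤ A.T := by
  by_contra! hT
  obtain ⟨s, hout, hs⟩ := hA.exists_finalState_ne_zero (b := true) (x := X Finset.univ)
    (by simp [hf, ofProp])
  have hzero : ∀ S, S ≠ Finset.univ → A.finalState (X S) s = 0 := fun S hS =>
    hA.finalState_eq_zero (b := false) (by simp [hf, ofProp, hS]) (by simp [hout])
  have hsum : ∑ S, (-1) ^ S.card * A.finalState (X S) s = 0 :=
    sum_neg_one_pow_card_mul_eq_zero hT (mulVec_qProd_mem_degSpan hX A.U A.init A.T s)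
  rw [Finset.sum_eq_single Finset.univ
    (fun S _ hS => mul_eq_zero_of_right _ (hzero S hS)) (by simp)] at hsum
  exact hs ((mul_eq_zero.1 hsum).resolve_left (pow_ne_zero _ (by norm_num)))

end QAlg

end PolynomialMethod

/-! ### The search function -/

/-- The rows of the search matrices, written in binary so that a row can serve as a pointer. -/
abbrev Row (L : ℕ) := Fin L → Fin 2

/-- The variables of the search function: the entries of two matrices with `2 ^ L` rows and `N`
columns, and for each pair of columns a cell that consists of a flag and a pointer to a row for each
column of either matrix, in binary. The matrices are indexed by `Bool`, so that `J : Bool → Fin N`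
is a choice of one column in each. -/
inductive SearchIdx (L N : ℕ)
  | entry (a : Bool) (r : Row L) (k : Fin N)
  | flag (J : Bool → Fin N)
  | pointer (J : Bool → Fin N) (a : Bool) (k : Fin N) (l : Fin L)
  deriving DecidableEq

/-- The entries, the flags and the pointers, as a disjoint union. -/
def SearchIdx.equivSum (L N : ℕ) : SearchIdx L N ≃
    Bool × Row L × Fin N ⊕ (Bool → Fin N) ⊕ (Bool → Fin N) × Bool × Fin N × Fin L where
  toFun
    | entry a r k => .inl (a, r, k)
    | flag J => .inr (.inl J)
    | pointer J a k l => .inr (.inr (J, a, k, l))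
  invFun
    | .inl (a, r, k) => entry a r k
    | .inr (.inl J) => flag J
    | .inr (.inr (J, a, k, l)) => pointer J a k l
  left_inv i := by cases i <;> rfl
  right_inv i := by rcases i with _ | _ | _ <;> rfl

instance (L N : ℕ) : Fintype (SearchIdx L N) := .ofEquiv _ (SearchIdx.equivSum L N).symm

/-- The cell of the columns `J` certifies that they are the unique all-ones columns of their
matrices: it is flagged, and it points to a zero in every other column. -/
def Accepts {L N : ℕ} (z : Input (SearchIdx L N) fun _ => 2) (J : Bool → Fin N) : Prop :=
  (∀ a r, z (.entry a r (J a)) = 1) ∧ z (.flag J) = 1 ∧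
    ∀ a k, k ≠ J a → z (.entry a (fun l => z (.pointer J a k l)) k) = 0

/-- The search function: is there a pair of all-ones columns with a certifying cell? -/
noncomputable def searchFn (L N : ℕ) : PartialFn (SearchIdx L N) fun _ => 2 :=
  fun z => some (ofProp (∃ J, Accepts z J))

section Hard

variable {L N : ℕ}

/-- A hard input with value `false`: column `k` of matrix `a` has its only zero in row `y (a, k)`,
and all cells are zero. -/
def hardNo (y : Bool × Fin N → Row L) : Input (SearchIdx L N) fun _ => 2
  | .entry a r k => if r = y (a, k) then 0 else 1
  | _ => 0

/-- A hard input with value `true`: in the matrices of `hardNo y` the zeros of the columns `J` are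
replaced by ones, and the cell of `J` holds the certificate. -/
def hardYes (y : Bool × Fin N → Row L) (J : Bool → Fin N) : Input (SearchIdx L N) fun _ => 2
  | .entry a r k => if r = y (a, k) ∧ k ≠ J a then 0 else 1
  | .flag J' => if J' = J then 1 else 0
  | .pointer J' a k l => if J' = J then y (a, k) l else 0

theorem searchFn_hardNo (y : Bool × Fin N → Row L) : searchFn L N (hardNo y) = some false := by
  simp only [searchFn, ofProp, Option.some.injEq, decide_eq_false_iff_not]
  rintro ⟨J, hJ, -⟩
  simpa [hardNo] using hJ true (y (true, J true))

theorem accepts_hardYes (y : Bool × Fin N → Row L) (J : Bool → Fin N) :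
    Accepts (hardYes y J) J := by
  refine ⟨fun a r => ?_, ?_, fun a k hk => ?_⟩
  · simp [hardYes]
  · simp [hardYes]
  · simp [hardYes, hk]

theorem searchFn_hardYes (y : Bool × Fin N → Row L) (J : Bool → Fin N) :
    searchFn L N (hardYes y J) = some true := by
  simpa [searchFn, ofProp] using ⟨J, accepts_hardYes y J⟩

/-- The position of the only zero in the column `q` of `hardNo y`. -/
def zeroPos (y : Bool × Fin N → Row L) (q : Bool × Fin N) : SearchIdx L N :=
  .entry q.1 (y q) q.2

/-- The column or the cell to which a variable belongs. -/
def block : SearchIdx L N → (Bool × Fin N) ⊕ (Bool → Fin N)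
  | .entry a _ k => .inl (a, k)
  | .flag J => .inr J
  | .pointer J _ _ _ => .inr J

theorem hardNo_update (y : Bool × Fin N → Row L) (q : Bool × Fin N) (r : Row L) :
    hardNo (Function.update y q r) =
      Function.update (fun s => if block s = .inl q then 1 else hardNo y s)
        (.entry q.1 r q.2) 0 := by
  ext s
  cases s with
  | entry a r' k =>
    by_cases hak : (a, k) = q
    · subst hak
      by_cases hr : r' = r <;> simp [hardNo, block, hr]
    · have hs : SearchIdx.entry a r' k ≠ .entry q.1 r q.2 := fun h => by
        simp_all [Prod.ext_iff]
      simp [hardNo, block, hak, hs]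
  | flag J => simp [hardNo, block]
  | pointer J a k l => simp [hardNo, block]

variable {M : Type} (T : DTree (SearchIdx L N) (fun _ => 2) M)

theorem exists_mem_queries_of_eval_hard_ne {y : Bool × Fin N → Row L} {J : Bool → Fin N}
    (h : T.eval (hardNo y) ≠ T.eval (hardYes y J)) :
    (∃ a, zeroPos y (a, J a) ∈ T.queries (hardNo y)) ∨
      ∃ s ∈ T.queries (hardNo y), block s = .inr J := by
  by_contra! hmiss
  refine h (T.eval_congr fun s hs => ?_)
  cases s with
  | entry a r k =>
    by_cases hk : k = J a
    · subst hk
      have hr : r ≠ y (a, J a) := fun hr => hmiss.1 a (by rwa [zeroPos, ← hr])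
      simp [hardNo, hardYes, hr]
    · simp [hardNo, hardYes, hk]
  | flag J' =>
    have hJ : J' ≠ J := fun hJ => hmiss.2 _ hs (congrArg Sum.inr hJ)
    simp [hardNo, hardYes, hJ]
  | pointer J' a k l =>
    have hJ : J' ≠ J := fun hJ => hmiss.2 _ hs (congrArg Sum.inr hJ)
    simp [hardNo, hardYes, hJ]

theorem sum_countP_block_add_le (x : Input (SearchIdx L N) fun _ => 2) :
    ∑ q, (T.queries x).countP (fun s => block s = .inl q) +
      ∑ J, (T.queries x).countP (fun s => block s = .inr J) ≤ T.depth := by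
  rw [← Fintype.sum_sum_type fun c => (T.queries x).countP fun s => block s = c,
    sum_countP_eq_length]
  exact T.length_queries_le_depth x

theorem card_block_mem_queries_le (x : Input (SearchIdx L N) fun _ => 2) :
    (Finset.univ.filter fun J => ∃ s ∈ T.queries x, block s = .inr J).card ≤ T.depth := by
  rw [Finset.card_filter]
  refine (Finset.sum_le_sum fun J _ => ?_).trans
    ((Nat.le_add_left _ _).trans (sum_countP_block_add_le T x))
  split_ifs with h
  · exact List.countP_pos_iff.2 (by simpa using h)
  · exact Nat.zero_le _

theorem two_pow_mul_card_zero_mem_queries_le (q : Bool × Fin N) :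
    2 ^ L * (Finset.univ.filter fun y => zeroPos y q ∈ T.queries (hardNo y)).card ≤
      2 * ∑ y, (T.queries (hardNo y)).countP fun s => block s = .inl q := by
  have hcard : Fintype.card (Row L) = 2 ^ L := by simp
  have hp : Function.Injective fun r : Row L => SearchIdx.entry q.1 r q.2 :=
    fun r r' h => by simpa using h
  refine Nat.le_of_mul_le_mul_left ?_ (show 0 < 2 ^ L by positivity)
  have key := fun y : Bool × Fin N → Row L => T.card_mem_queries_mul_card_le hp
    (fun s => if block s = .inl q then 1 else hardNo y s) (fun _ => 0)
    (A := fun s => block s = .inl q) (fun _ => rfl) Finset.univ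
  calc _ = 2 ^ L * ∑ y, ∑ r, if zeroPos (Function.update y q r) q ∈
        T.queries (hardNo (Function.update y q r)) then 1 else 0 := by
        rw [Finset.card_filter, ← hcard, ← smul_eq_mul (Fintype.card (Row L)) (∑ y, _),
          card_smul_sum_eq_sum_update (R := fun _ : Bool × Fin N => Row L) _ q]
    _ ≤ ∑ y : Bool × Fin N → Row L, 2 * ∑ r, (T.queries (hardNo (Function.update y q r))).countP
        fun s => block s = .inl q := by
        rw [Finset.mul_sum]
        refine Finset.sum_le_sum fun y _ => ?_
        simpa only [hardNo_update, zeroPos, Function.update_self, ← Finset.card_filter, mul_comm,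
          Finset.card_univ, hcard] using key y
    _ = 2 ^ L * _ := by
        rw [← Finset.mul_sum, mul_left_comm, ← hcard, ← smul_eq_mul (Fintype.card (Row L)) (∑ y, _),
          card_smul_sum_eq_sum_update (R := fun _ : Bool × Fin N => Row L) _ q]

theorem two_pow_mul_sum_card_zero_mem_queries_le :
    2 ^ L * ∑ q, (Finset.univ.filter fun y => zeroPos y q ∈ T.queries (hardNo y)).card ≤
      2 * (Fintype.card (Bool × Fin N → Row L) * T.depth) := by
  calc _ ≤ ∑ q, 2 * ∑ y : Bool × Fin N → Row L,
        (T.queries (hardNo y)).countP fun s => block s = .inl q := by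
        rw [Finset.mul_sum]
        exact Finset.sum_le_sum fun q _ => two_pow_mul_card_zero_mem_queries_le T q
    _ = 2 * ∑ y : Bool × Fin N → Row L, ∑ q,
        (T.queries (hardNo y)).countP fun s => block s = .inl q := by
        rw [← Finset.mul_sum, Finset.sum_comm]
    _ ≤ 2 * (Fintype.card (Bool × Fin N → Row L) * T.depth) := by
        refine Nat.mul_le_mul_left 2 (Finset.sum_le_card_nsmul _ _ _ fun y _ => ?_)
        exact (Nat.le_add_right _ _).trans (sum_countP_block_add_le T _)

theorem sum_apply_bool {A : Type} [Fintype A] (h : A → ℕ) (a : Bool) :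
    ∑ J : Bool → A, h (J a) = Fintype.card A * ∑ k, h k := by
  rw [← (Equiv.boolArrowEquivProd A).symm.sum_comp, Fintype.sum_prod_type]
  cases a <;> simp [Equiv.boolArrowEquivProd, Finset.mul_sum]

theorem card_eval_hard_ne_le [DecidableEq M] :
    (Finset.univ.filter fun p : (Bool × Fin N → Row L) × (Bool → Fin N) =>
        T.eval (hardNo p.1) ≠ T.eval (hardYes p.1 p.2)).card ≤
      N * ∑ q, (Finset.univ.filter fun y => zeroPos y q ∈ T.queries (hardNo y)).card +
        Fintype.card (Bool × Fin N → Row L) * T.depth := by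
  let hit (y : Bool × Fin N → Row L) (q : Bool × Fin N) : ℕ :=
    if zeroPos y q ∈ T.queries (hardNo y) then 1 else 0
  let cell (y : Bool × Fin N → Row L) (J : Bool → Fin N) : ℕ :=
    if ∃ s ∈ T.queries (hardNo y), block s = .inr J then 1 else 0
  have hpair : ∀ y J, (if T.eval (hardNo y) ≠ T.eval (hardYes y J) then 1 else 0) ≤
      ∑ a, hit y (a, J a) + cell y J := fun y J => by
    split_ifs with h
    · rcases exists_mem_queries_of_eval_hard_ne T h with ⟨a, ha⟩ | hJ
      · have hle := Finset.single_le_sum (f := fun a => hit y (a, J a)) (fun _ _ => Nat.zero_le _)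
          (Finset.mem_univ a)
        rw [show hit y (a, J a) = 1 from if_pos ha] at hle
        exact hle.trans (Nat.le_add_right _ _)
      · simp only [cell, if_pos hJ, Nat.le_add_left]
    · exact Nat.zero_le _
  have hcell : ∀ y, ∑ J, cell y J ≤ T.depth := fun y => by
    rw [← Finset.card_filter]
    exact card_block_mem_queries_le T (hardNo y)
  calc _ ≤ ∑ y, (∑ J : Bool → Fin N, ∑ a, hit y (a, J a) + ∑ J, cell y J) := by
        rw [Finset.card_filter, Fintype.sum_prod_type]
        simp only [← Finset.sum_add_distrib]
        exact Finset.sum_le_sum fun y _ => Finset.sum_le_sum fun J _ => hpair y J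
    _ ≤ ∑ y, (N * ∑ q, hit y q + T.depth) := by
        refine Finset.sum_le_sum fun y _ => Nat.add_le_add (le_of_eq ?_) (hcell y)
        rw [Finset.sum_comm, Fintype.sum_prod_type, Finset.mul_sum]
        exact Finset.sum_congr rfl fun a _ => by
          rw [sum_apply_bool (fun k => hit y (a, k)) a, Fintype.card_fin]
    _ = _ := by
        rw [Finset.sum_add_distrib, ← Finset.mul_sum, Finset.sum_comm]
        simp only [Finset.card_filter, Finset.sum_const, Finset.card_univ, smul_eq_mul, hit]

theorem two_pow_mul_sq_le_Rq_searchFn (L N : ℕ) :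
    2 ^ L * N ^ 2 ≤ 3 * ((2 * N + 2 ^ L) * Rq (searchFn L N)) := by
  set R := Rq (searchFn L N)
  set Y := Fintype.card (Bool × Fin N → Row L)
  have hpairs := card_le_of_eval_ne_le (b := (2 * N + 2 ^ L) * R * Y / 2 ^ L)
    (fun p : (Bool × Fin N → Row L) × (Bool → Fin N) => searchFn_hardNo p.1)
    (fun p => searchFn_hardYes p.1 p.2) fun T hT => by
      rw [Nat.le_div_iff_mul_le (by positivity), mul_comm]
      calc _ ≤ 2 ^ L * (N * ∑ q, _ + Y * T.depth) :=
            Nat.mul_le_mul_left _ (card_eval_hard_ne_le T)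
        _ = N * (2 ^ L * ∑ q, _) + 2 ^ L * (Y * T.depth) := by ring
        _ ≤ N * (2 * (Y * T.depth)) + 2 ^ L * (Y * T.depth) := by
            exact Nat.add_le_add_right
              (Nat.mul_le_mul_left N (two_pow_mul_sum_card_zero_mem_queries_le T)) _
        _ ≤ N * (2 * (Y * R)) + 2 ^ L * (Y * R) := by gcongr
        _ = (2 * N + 2 ^ L) * R * Y := by ring
  have hcard : Fintype.card ((Bool × Fin N → Row L) × (Bool → Fin N)) = Y * N ^ 2 := by
    simp [Y]
  rw [hcard] at hpairs
  refine Nat.le_of_mul_le_mul_right ?_ (show 0 < Y from Fintype.card_pos)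
  calc 2 ^ L * N ^ 2 * Y = Y * N ^ 2 * 2 ^ L := by ring
    _ ≤ 3 * ((2 * N + 2 ^ L) * R * Y / 2 ^ L) * 2 ^ L := Nat.mul_le_mul_right _ hpairs
    _ = 3 * ((2 * N + 2 ^ L) * R * Y / 2 ^ L * 2 ^ L) := mul_assoc _ _ _
    _ ≤ 3 * ((2 * N + 2 ^ L) * R * Y) := Nat.mul_le_mul_left 3 (Nat.div_mul_le_self _ _)
    _ = 3 * ((2 * N + 2 ^ L) * R) * Y := by ring

end Hard

section SearchQuantum

variable {L N : ℕ}

/-- Column `k` of matrix `a` has only ones. The value `none` stands for the extra basis state of the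
search and counts as no column. -/
def FullCol (z : Input (SearchIdx L N) fun _ => 2) (a : Bool) (k : Option (Fin N)) : Prop :=
  ∃ k', k = some k' ∧ ∀ r, z (.entry a r k') = 1

theorem Accepts.fullCol_iff {z : Input (SearchIdx L N) fun _ => 2} {J : Bool → Fin N}
    (h : Accepts z J) (a : Bool) (k : Option (Fin N)) : FullCol z a k ↔ k = some (J a) := by
  constructor
  · rintro ⟨k, rfl, hk⟩
    by_contra hne
    exact one_ne_zero ((hk _).symm.trans (h.2.2 a k fun hkJ => hne (congrArg some hkJ)))
  · rintro rfl
    exact ⟨_, rfl, h.1 a⟩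

variable {ι : Type} (e : SearchIdx L N → ι)

theorem treeComputable_fullCol (a : Bool) (k : Option (Fin N)) :
    TreeComputable (2 ^ L) fun x : Input ι fun _ => 2 =>
      ofProp (FullCol (fun s => x (e s)) a k) := by
  cases k with
  | none => simpa [FullCol] using (TreeComputable.const (ofProp False)).mono (Nat.zero_le _)
  | some k =>
    simpa [FullCol] using TreeComputable.ofProp_forall fun r : Row L =>
      (TreeComputable.query (α := fun _ => 2) (e (.entry a r k))).map fun c => ofProp (c = 1)

theorem treeComputable_accepts (J : Bool → Fin N) :
    TreeComputable (2 * 2 ^ L + (1 + 2 * N * (L + 1))) fun x : Input ι fun _ => 2 =>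
      ofProp (Accepts (fun s => x (e s)) J) := by
  have hquery := fun s (p : Fin 2 → Prop) =>
    (TreeComputable.query (α := fun _ => 2) (e s)).map fun c => ofProp (p c)
  have hones := TreeComputable.ofProp_forall fun p : Bool × Row L =>
    hquery (.entry p.1 p.2 (J p.1)) fun c => c = 1
  have hzeros := TreeComputable.ofProp_forall fun p : Bool × Fin N =>
    (TreeComputable.pi fun l =>
      TreeComputable.query (α := fun _ => 2) (e (.pointer J p.1 p.2 l))).bind fun r =>
        hquery (.entry p.1 r p.2) fun c => p.2 ≠ J p.1 → c = 0
  simpa [Accepts] using hones.ofProp_and ((hquery (.flag J) fun c => c = 1).ofProp_and hzeros)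

variable [Inhabited ι] [Fintype ι] [DecidableEq ι]

theorem QEq_searchFn_comap_le {k : ℕ} (hN : N ≤ k ^ 2) :
    QEq ((searchFn L N).comap e) ≤
      2 * 2 ^ L + (1 + 2 * N * (L + 1)) + k * (2 * (2 ^ L + 2 ^ L)) := by
  obtain ⟨A, hA, v, hv, hAv⟩ := exists_exact_search_pair (Fin N) (k := k) (by simpa using hN)
  have hcheck : ∀ w : Option (Fin N) × Option (Fin N),
      TreeComputable (2 * 2 ^ L + (1 + 2 * N * (L + 1))) fun x : Input ι fun _ => 2 =>
        ofProp (∃ J : Bool → Fin N, w = (some (J false), some (J true)) ∧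
          Accepts (fun s => x (e s)) J) := fun w => by
    by_cases hJ : ∃ J : Bool → Fin N, w = (some (J false), some (J true))
    · obtain ⟨J, rfl⟩ := hJ
      convert treeComputable_accepts e J using 3
      refine ⟨?_, fun h => ⟨J, rfl, h⟩⟩
      rintro ⟨J', hJ', h⟩
      have hJJ' : J = J' := funext fun a => by cases a <;> simp_all
      rwa [hJJ']
    · convert (TreeComputable.const (ofProp False)).mono (Nat.zero_le _) using 3
      exact iff_false_intro fun ⟨J, hw, _⟩ => hJ ⟨J, hw⟩
  obtain ⟨B, hBT, hB⟩ := exists_isExact_of_iterate (f := (searchFn L N).comap e) hA hv (t := k)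
    (fun w => (treeComputable_fullCol e false w.1).map₂ (treeComputable_fullCol e true w.2) xor)
    (fun w => (hcheck w).map some) fun x b hb w hw => by
      rw [← hb]
      refine congrArg (fun P => some (ofProp P)) (propext ⟨fun ⟨J, _, h⟩ => ⟨J, h⟩, ?_⟩)
      rintro ⟨J, hJ⟩
      simp only [hJ.fullCol_iff] at hw
      exact ⟨J, hAv _ _ w hw, hJ⟩
  exact hBT ▸ hB.QEq_le

/-- Exactness on the inputs in which one column of an accepted pair is replaced by an arbitrary one
amounts to an exact computation of a conjunction of `2 ^ L` variables. -/
theorem two_pow_le_QEq_searchFn_comap [NeZero N] {e : SearchIdx L N → ι}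
    (he : Function.Injective e) : 2 ^ L ≤ QEq ((searchFn L N).comap e) := by
  refine le_QEq fun A hA => ?_
  let z (S : Finset (Row L)) (s : SearchIdx L N) : Fin 2 :=
    if ∃ r ∉ S, s = .entry false r 0 then 0 else hardYes 0 0 s
  have hf : ∀ S, searchFn L N (z S) = some (ofProp (S = Finset.univ)) := fun S => by
    refine congrArg (fun P => some (ofProp P)) (propext ⟨fun ⟨J, hJ, hflag, _⟩ => ?_, ?_⟩)
    · have hJ0 : J = 0 := by
        simpa [z, hardYes] using hflag
      subst hJ0
      refine Finset.eq_univ_iff_forall.2 fun r => ?_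
      simpa [z, hardYes] using hJ false r
    · rintro rfl
      have hz : z Finset.univ = hardYes 0 0 := by simp [z]
      exact ⟨0, hz ▸ accepts_hardYes 0 0⟩
  have hcard := hA.card_le (I := Row L) (X := fun S => Function.extend e (z S) 0) ?_ ?_
  · simpa using hcard
  · intro i c
    by_cases hi : ∃ s, e s = i
    · obtain ⟨s, rfl⟩ := hi
      simp only [he.extend_apply]
      by_cases hs : ∃ r, s = .entry false r 0
      · obtain ⟨r, rfl⟩ := hs
        convert ite_mem_degSpan_one r (if hardYes 0 0 (SearchIdx.entry (N := N) false r 0) = c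
          then 1 else 0) (if 0 = c then 1 else 0) using 2 with S
        by_cases hr : r ∈ S <;> simp [z, hr]
      · have hz : ∀ S, z S s = hardYes 0 0 s := fun S => if_neg fun ⟨r, _, h⟩ => hs ⟨r, h⟩
        simpa only [hz] using const_mem_degSpan 1 _
    · simpa only [Function.extend_apply' _ _ _ hi] using const_mem_degSpan 1 _
  · intro S
    simp only [PartialFn.comap, he.extend_apply, hf]

end SearchQuantum

/-! ### The family -/

section Family

variable {L n : ℕ}

theorem eight_pow_le_Rq_searchFn (L : ℕ) : 8 ^ L ≤ 9 * Rq (searchFn L (4 ^ L)) := by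
  have h24 : 2 ^ L ≤ 4 ^ L := Nat.pow_le_pow_left (by norm_num) L
  refine Nat.le_of_mul_le_mul_left ?_ (show 0 < 4 ^ L by positivity)
  calc 4 ^ L * 8 ^ L = 2 ^ L * (4 ^ L) ^ 2 := by
        rw [← mul_pow, ← pow_mul, mul_comm L 2, pow_mul, ← mul_pow]
        norm_num
    _ ≤ 3 * ((2 * 4 ^ L + 2 ^ L) * Rq (searchFn L (4 ^ L))) := two_pow_mul_sq_le_Rq_searchFn L _
    _ ≤ 3 * ((2 * 4 ^ L + 4 ^ L) * Rq (searchFn L (4 ^ L))) := by gcongr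
    _ = 4 ^ L * (9 * Rq (searchFn L (4 ^ L))) := by ring

theorem QEq_searchFn_comap_le_nine_mul [NeZero n] (e : SearchIdx L (4 ^ L) → Fin n) :
    QEq ((searchFn L (4 ^ L)).comap e) ≤ 9 * (4 ^ L * (L + 1)) := by
  have h4 : 4 ^ L = (2 ^ L) ^ 2 := by rw [← pow_mul, mul_comm, pow_mul]; norm_num
  have h1 : 1 ≤ 2 ^ L := Nat.one_le_two_pow
  refine (QEq_searchFn_comap_le e h4.le).trans ?_
  rw [h4]
  nlinarith [Nat.zero_le ((2 ^ L) ^ 2 * L)]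

theorem rpow_three_halves_le_of_le {Q R : ℝ} (hQ0 : 0 ≤ Q) (hQ : Q ≤ 9 * (4 ^ L * (L + 1)))
    (hR : 8 ^ L ≤ 9 * R) : Q ^ ((3 : ℝ) / 2) ≤ 243 * (L + 1) ^ 2 * R := by
  have hsq : (9 * 4 ^ L : ℝ) = (3 * 2 ^ L) ^ (2 : ℝ) := by
    rw [Real.rpow_two, mul_pow, ← pow_mul, mul_comm L, pow_mul]
    norm_num
  calc Q ^ ((3 : ℝ) / 2) ≤ (9 * (4 ^ L * (L + 1))) ^ ((3 : ℝ) / 2) := by gcongr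
    _ = ((3 * 2 ^ L) ^ (2 : ℝ)) ^ ((3 : ℝ) / 2) * ((L : ℝ) + 1) ^ ((3 : ℝ) / 2) := by
        rw [← mul_assoc, hsq, Real.mul_rpow (by positivity) (by positivity)]
    _ ≤ ((3 * 2 ^ L) ^ (2 : ℝ)) ^ ((3 : ℝ) / 2) * ((L : ℝ) + 1) ^ (2 : ℝ) := by
        gcongr
        · simp
        · norm_num
    _ = 27 * (L + 1) ^ 2 * 8 ^ L := by
        rw [← Real.rpow_mul (by positivity), show (2 * (3 / 2) : ℝ) = (3 : ℕ) by norm_num,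
          Real.rpow_natCast, Real.rpow_two, mul_pow, ← pow_mul, mul_comm L 3, pow_mul]
        norm_num
        ring
    _ ≤ 27 * (L + 1) ^ 2 * (9 * R) := by gcongr
    _ = 243 * (L + 1) ^ 2 * R := by ring

theorem QEq_rpow_le_Rq_searchFn_comap [NeZero n] {e : SearchIdx L (4 ^ L) → Fin n}
    (he : Function.Injective e) :
    (QEq ((searchFn L (4 ^ L)).comap e) : ℝ) ^ ((3 : ℝ) / 2) ≤
      243 * (L + 1) ^ 2 * Rq ((searchFn L (4 ^ L)).comap e) :=
  rpow_three_halves_le_of_le (Nat.cast_nonneg _)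
    (by exact_mod_cast QEq_searchFn_comap_le_nine_mul e)
    (by exact_mod_cast ((eight_pow_le_Rq_searchFn L).trans
      (Nat.mul_le_mul_left 9 (Rq_le_Rq_comap he _))))

theorem SearchIdx.card (L N : ℕ) :
    Fintype.card (SearchIdx L N) = 2 * 2 ^ L * N + N ^ 2 + N ^ 2 * (2 * N * L) := by
  rw [Fintype.card_congr (SearchIdx.equivSum L N)]
  simp only [Fintype.card_sum, Fintype.card_prod, Fintype.card_pi, Fintype.card_bool,
    Fintype.card_fin, Finset.prod_const, Finset.card_univ]
  ring

theorem exists_injective_searchIdx (h : 8 * (L + 1) ≤ Nat.log 2 n) :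
    ∃ e : SearchIdx L (4 ^ L) → Fin n, Function.Injective e := by
  have hn : n ≠ 0 := by
    rintro rfl
    simp at h
  have hcard : Fintype.card (SearchIdx L (4 ^ L)) ≤ n := by
    have hL : L ≤ 2 ^ L := Nat.lt_two_pow_self.le
    have h1 : 1 ≤ 2 ^ L := Nat.one_le_two_pow
    have h4 : 4 ^ L = (2 ^ L) ^ 2 := by rw [← pow_mul, mul_comm, pow_mul]; norm_num
    calc Fintype.card (SearchIdx L (4 ^ L))
        = 2 * (2 ^ L) ^ 3 + (2 ^ L) ^ 4 + 2 * (2 ^ L) ^ 6 * L := by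
          rw [SearchIdx.card, h4]
          ring
      _ ≤ 2 * (2 ^ L) ^ 8 + (2 ^ L) ^ 8 + 2 * (2 ^ L) ^ 7 * 2 ^ L := by gcongr <;> norm_num
      _ = 5 * (2 ^ L) ^ 8 := by ring
      _ ≤ 256 * (2 ^ L) ^ 8 := Nat.mul_le_mul_right _ (by norm_num)
      _ = 2 ^ (8 * (L + 1)) := by
          rw [mul_add, pow_add, mul_comm 8 L, pow_mul, mul_comm]
          norm_num
      _ ≤ n := (Nat.pow_le_pow_right two_pos h).trans (Nat.pow_log_le_self 2 hn)
  obtain ⟨e⟩ := Function.Embedding.nonempty_of_card_le (hcard.trans_eq (Fintype.card_fin n).symm)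
  exact ⟨e, e.injective⟩

theorem add_one_le_log_of_le_natLog (h : 8 * (L + 1) ≤ Nat.log 2 n) :
    (L : ℝ) + 1 ≤ Real.log n := by
  have hlog : (8 * (L + 1) : ℝ) ≤ Real.logb 2 n :=
    (by exact_mod_cast h : (8 * (L + 1) : ℝ) ≤ Nat.log 2 n).trans
      (by exact_mod_cast Real.natLog_le_logb n 2)
  rw [Real.logb, le_div_iff₀ (Real.log_pos one_lt_two)] at hlog
  nlinarith [Real.log_two_gt_d9, Nat.cast_nonneg (α := ℝ) L]

theorem exists_totalFn_QEq_rpow_le (n : ℕ) :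
    ∃ f : PartialFn (Fin n) fun _ => 2, TotalFn f ∧ Nat.log 2 n / 8 - 1 ≤ QEq f ∧
      (n ≠ 0 → (QEq f : ℝ) ^ ((3 : ℝ) / 2) ≤ 243 * Real.log n ^ 2 * Rq f) := by
  rcases lt_or_ge (Nat.log 2 n) 8 with hlog | hlog
  · refine ⟨fun _ => some false, fun _ => Option.some_ne_none _, by omega, fun hn => ?_⟩
    have : NeZero n := ⟨hn⟩
    rw [Nat.le_zero.1 (QEq_le_of_treeComputable (.const _)), Nat.cast_zero,
      Real.zero_rpow (by norm_num)]
    positivity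
  · set L := Nat.log 2 n / 8 - 1
    have hL : 8 * (L + 1) ≤ Nat.log 2 n := by omega
    have : NeZero n := ⟨by rintro rfl; simp at hlog⟩
    obtain ⟨e, he⟩ := exists_injective_searchIdx hL
    refine ⟨(searchFn L (4 ^ L)).comap e, fun _ => Option.some_ne_none _, ?_, fun _ => ?_⟩
    · exact Nat.lt_two_pow_self.le.trans (two_pow_le_QEq_searchFn_comap he)
    · refine (QEq_rpow_le_Rq_searchFn_comap he).trans ?_
      gcongr
      exact add_one_le_log_of_le_natLog hL

end Family

end QC

/-- There is a family of total Boolean functions with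
`R(f) = Ω̃(Q_E(f)^{3/2})`. -/
theorem randomized_vs_exact_quantum_power_three_halves :
    ∃ f : ∀ n : ℕ, QC.PartialFn (Fin n) (fun _ => 2),
      (∀ n, QC.TotalFn (f n)) ∧
      Filter.Tendsto (fun n => QC.QEq (f n)) Filter.atTop Filter.atTop ∧
      ∃ (C : ℝ) (e : ℕ), 0 < C ∧ ∀ n : ℕ, 2 ≤ n →
        (QC.QEq (f n) : ℝ) ^ ((3 : ℝ) / 2) ≤ C * (Real.log n) ^ e * (QC.Rq (f n) : ℝ) := by
  choose f htotal hlower hupper using QC.exists_totalFn_QEq_rpow_le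
  refine ⟨f, htotal, Filter.tendsto_atTop.2 fun b => ?_, 243, 2, by norm_num,
    fun n hn => hupper n (by omega)⟩
  filter_upwards [Filter.eventually_ge_atTop (2 ^ (8 * (b + 1)))] with n hn
  have hlog : 8 * (b + 1) ≤ Nat.log 2 n := Nat.le_log_of_pow_le one_lt_two hn
  exact (show b ≤ Nat.log 2 n / 8 - 1 by omega).trans (hlower n)
end
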